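/- arXiv:0908.3521 — 9 statements merged into one kernel-verified Lean document; each statement's English description precedes it below -/
import Mathlib

section
/- Let p be an odd prime, n a natural number, and a : Fin n → ℚ_p coefficients such that the diagonal quadratic form Q(x) = ∑_i a_i · x_i² is anisotropic, i.e. Q(x) = 0 implies x = 0. Then for every x ∈ (ℚ_p)^n one has ‖Q(x)‖_p = max_i ‖a_i · x_i²‖_p (the maximum over i ∈ Fin n, interpreted as 0 when n = 0). -/
theorem sqrt_one_sub (p : ℕ) [Fact p.Prime] (hp2 : p ≠ 2) (u : ℚ_[p]) (hu : ‖u‖ < 1) :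
    ∃ s : ℚ_[p], s ^ 2 = 1 - u := by
  have h2 : ‖(2 : ℤ_[p])‖ = 1 := by
    have : ‖((2 : ℤ) : ℤ_[p])‖ = 1 := by
      refine le_antisymm (PadicInt.norm_le_one _) (not_lt.1 fun h => ?_)
      rw [PadicInt.norm_int_lt_one_iff_dvd] at h
      have h' : p ∣ 2 := by exact_mod_cast h
      exact hp2 ((Nat.prime_dvd_prime_iff_eq Fact.out Nat.prime_two).1 h')
    simpa using this
  let v : ℤ_[p] := ⟨u, hu.le⟩
  have hv : ‖v‖ < 1 := hu
  obtain ⟨z, hz, -⟩ := hensels_lemma (p := p) (R := ℤ_[p])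
    (F := Polynomial.X ^ 2 - Polynomial.C (1 - v)) (a := 1) (by
      simp [one_add_one_eq_two, h2, hv])
  refine ⟨(z : ℚ_[p]), ?_⟩
  have h : z ^ 2 = 1 - v := by
    have : z ^ 2 - (1 - v) = 0 := by simpa using hz
    exact sub_eq_zero.1 this
  have h3 := congrArg (fun t : ℤ_[p] => (t : ℚ_[p])) h
  simp only [PadicInt.coe_pow, PadicInt.coe_sub, PadicInt.coe_one] at h3
  exact h3

theorem stmt_0 (p : ℕ) [Fact p.Prime] (hp2 : p ≠ 2) (n : ℕ) (a : Fin n → ℚ_[p])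
    (haniso : ∀ x : Fin n → ℚ_[p], (∑ i, a i * x i ^ 2) = 0 → x = 0) :
    ∀ x : Fin n → ℚ_[p], ‖∑ i, a i * x i ^ 2‖ = ⨆ i, ‖a i * x i ^ 2‖ := by
  intro x
  rcases isEmpty_or_nonempty (Fin n) with hn | hn
  · simp
  obtain ⟨j, hj⟩ := Finite.exists_max fun i => ‖a i * x i ^ 2‖
  have hM : ⨆ i, ‖a i * x i ^ 2‖ = ‖a j * x j ^ 2‖ :=
    le_antisymm (ciSup_le hj)
      (le_ciSup (f := fun i => ‖a i * x i ^ 2‖) (Set.finite_range _).bddAbove j)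
  rw [hM]
  refine le_antisymm ?_ (not_lt.1 fun hlt => ?_)
  · exact IsUltrametricDist.norm_sum_le_of_forall_le_of_nonneg (norm_nonneg _) fun i _ => hj i
  · have hpos : 0 < ‖a j * x j ^ 2‖ := (norm_nonneg _).trans_lt hlt
    have hne : a j * x j ^ 2 ≠ 0 := norm_pos_iff.1 hpos
    have hx : x j ≠ 0 := by
      intro h
      simp [h] at hne
    set q := ∑ i, a i * x i ^ 2 with hq
    have hu : ‖q / (a j * x j ^ 2)‖ < 1 := by
      rw [norm_div, div_lt_one hpos]
      exact hlt
    obtain ⟨s, hs⟩ := sqrt_one_sub p hp2 _ hu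
    have hs0 : s ≠ 0 := by
      rintro rfl
      have : q / (a j * x j ^ 2) = 1 := by linear_combination hs
      rw [this] at hu
      simp at hu
    have hz := haniso (Function.update x j (x j * s)) (by
      rw [← Finset.add_sum_erase _ _ (Finset.mem_univ j)] at hq ⊢
      rw [Finset.sum_congr rfl (g := fun i => a i * x i ^ 2) (fun i hi => by
        rw [Function.update_of_ne (Finset.ne_of_mem_erase hi)])]
      rw [Function.update_self, mul_pow, hs]
      have : a j * x j ^ 2 * (q / (a j * x j ^ 2)) = q := mul_div_cancel₀ _ hne
      linear_combination -this - hq)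
    have := congrFun hz j
    simp [hx, hs0] at this
end

section
/- Let p be an odd prime, t a nonzero integer whose p-adic valuation is T, and ℓ a natural number with ℓ > 2T. Then the number of elements x of ℤ/p^ℓℤ satisfying x² = t̄², where t̄ is the image of t in ℤ/p^ℓℤ, is exactly 2·p^T. -/
theorem aux_dvd (p : ℤ) (hp : Prime p) (T ℓ : ℕ) (a b : ℤ)
    (h : p ^ ℓ ∣ a * b) (ha : ¬ p ^ (T + 1) ∣ a) : p ^ (ℓ - T) ∣ b := by
  have ha0 : a ≠ 0 := by rintro rfl; exact ha (dvd_zero _)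
  have hf : FiniteMultiplicity p a := FiniteMultiplicity.of_prime_left hp ha0
  obtain ⟨c, hc, hpc⟩ := hf.exists_eq_pow_mul_and_not_dvd
  set j := multiplicity p a with hj
  have hjT : j ≤ T := by
    by_contra hlt
    exact ha (hc ▸ (pow_dvd_pow p (by omega)).mul_right c)
  rcases le_total ℓ T with h1 | h1
  · simp [Nat.sub_eq_zero_of_le h1]
  have h2 : p ^ j * p ^ (ℓ - j) ∣ p ^ j * (c * b) := by
    rw [← pow_add, Nat.add_sub_cancel' (hjT.trans h1), ← mul_assoc, ← hc]; exact h
  have h3 := (mul_dvd_mul_iff_left (pow_ne_zero j hp.ne_zero)).1 h2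
  have h4 := hp.pow_dvd_of_dvd_mul_left _ hpc h3
  exact (pow_dvd_pow p (by omega)).trans h4

theorem stmt_2 (p : ℕ) (hp : p.Prime) (hp2 : p ≠ 2) (t : ℤ) (ht : t ≠ 0)
    (T : ℕ) (hT : padicValInt p t = T) (ℓ : ℕ) (hℓ : 2 * T < ℓ) :
    Nat.card {x : ZMod (p ^ ℓ) // x ^ 2 = (t : ZMod (p ^ ℓ)) ^ 2} = 2 * p ^ T := by
  haveI : Fact p.Prime := ⟨hp⟩
  haveI : NeZero (p ^ ℓ) := ⟨pow_ne_zero _ hp.ne_zero⟩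
  have hpz : Prime (p : ℤ) := Nat.prime_iff_prime_int.1 hp
  have hTd : (p : ℤ) ^ T ∣ t := by
    rw [padicValInt_dvd_iff]; right; omega
  have hTn : ¬ (p : ℤ) ^ (T + 1) ∣ 2 * t := by
    intro h
    have h2 : ¬ (p : ℤ) ∣ 2 := by
      intro h
      have : p ∣ 2 := by exact_mod_cast h
      exact hp2 ((Nat.prime_dvd_prime_iff_eq hp Nat.prime_two).1 this)
    have := hpz.pow_dvd_of_dvd_mul_left _ h2 h
    rw [padicValInt_dvd_iff] at this
    omega
  have key : ∀ z : ℤ, ((z : ZMod (p ^ ℓ)) = 0 ↔ (p : ℤ) ^ ℓ ∣ z) := by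
    intro z
    rw [ZMod.intCast_zmod_eq_zero_iff_dvd]; push_cast; rfl
  have hsplit : (p : ℤ) ^ ℓ = p ^ (ℓ - T) * p ^ T := by
    rw [← pow_add]; congr 1; omega
  have hTl : (p : ℤ) ^ (T + 1) ∣ p ^ (ℓ - T) := pow_dvd_pow _ (by omega)
  have hTl' : (p : ℤ) ^ T ∣ p ^ (ℓ - T) := pow_dvd_pow _ (by omega)
  have hne : (p : ℤ) ^ (ℓ - T) ≠ 0 := pow_ne_zero _ hpz.ne_zero
  let sg : Bool → ℤ := fun s => if s then 1 else -1
  have hsg : ∀ s, sg s ^ 2 = 1 := by intro s; cases s <;> simp [sg]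
  let g : Bool × Fin (p ^ T) → ℤ := fun x => sg x.1 * t + (p : ℤ) ^ (ℓ - T) * (x.2 : ℕ)
  have hg : ∀ x, ((g x : ℤ) : ZMod (p ^ ℓ)) ^ 2 = (t : ZMod (p ^ ℓ)) ^ 2 := by
    intro x
    rw [← sub_eq_zero]
    have := (key (g x ^ 2 - t ^ 2)).2 (by
      have e : g x ^ 2 - t ^ 2 = p ^ (ℓ - T) *
          ((x.2 : ℕ) * (2 * sg x.1 * t + (p : ℤ) ^ (ℓ - T) * (x.2 : ℕ))) := by
        simp only [g]; linear_combination t ^ 2 * hsg x.1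
      rw [e, hsplit]
      exact mul_dvd_mul_left _ (Dvd.dvd.mul_left
        (dvd_add (hTd.mul_left _) (hTl'.mul_right _)) _))
    exact_mod_cast this
  let f : Bool × Fin (p ^ T) → {x : ZMod (p ^ ℓ) // x ^ 2 = (t : ZMod (p ^ ℓ)) ^ 2} :=
    fun x => ⟨(g x : ℤ), hg x⟩
  have hf : Function.Bijective f := by
    constructor
    · rintro ⟨s, k⟩ ⟨s', k'⟩ h
      have h1 : ((g (s, k) : ℤ) : ZMod (p ^ ℓ)) = (g (s', k') : ℤ) := congrArg Subtype.val h
      have h2 : (p : ℤ) ^ ℓ ∣ g (s, k) - g (s', k') := by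
        rw [← key]; push_cast; rw [h1, sub_self]
      have h3 : (p : ℤ) ^ (T + 1) ∣ (sg s - sg s') * t := by
        have e : (sg s - sg s') * t = (g (s, k) - g (s', k')) -
          (p : ℤ) ^ (ℓ - T) * (((k : ℕ) : ℤ) - (k' : ℕ)) := by simp only [g]; ring
        rw [e]
        exact dvd_sub ((pow_dvd_pow _ (by omega)).trans h2) (hTl.mul_right _)
      have hs : s = s' := by
        cases s <;> cases s' <;> try rfl
        · exact absurd (by simpa [sg] using (by norm_num [sg] at h3; exact h3)) hTn
        · exact absurd (by norm_num [sg] at h3; exact h3) hTn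
      subst hs
      have h4 : (p : ℤ) ^ (ℓ - T) * p ^ T ∣ p ^ (ℓ - T) * (((k : ℕ) : ℤ) - (k' : ℕ)) := by
        rw [← hsplit]; convert h2 using 1; simp only [g]; ring
      have h5 := (mul_dvd_mul_iff_left hne).1 h4
      have hk := k.2
      have hk' := k'.2
      have hkk : ((k : ℕ) : ℤ) - (k' : ℕ) = 0 := by
        apply Int.eq_zero_of_abs_lt_dvd h5
        have a1 : ((k : ℕ) : ℤ) < (p : ℤ) ^ T := by exact_mod_cast hk
        have a2 : ((k' : ℕ) : ℤ) < (p : ℤ) ^ T := by exact_mod_cast hk'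
        rw [abs_lt]; constructor <;> omega
      have : k = k' := Fin.ext (by omega)
      rw [this]
    · rintro ⟨x, hx⟩
      obtain ⟨z, rfl⟩ := ZMod.intCast_surjective x
      have h1 : (p : ℤ) ^ ℓ ∣ (z - t) * (z + t) := by
        rw [← key]; push_cast; linear_combination hx
      have h2 : ∃ s, (p : ℤ) ^ (ℓ - T) ∣ z - sg s * t := by
        by_cases ha : (p : ℤ) ^ (T + 1) ∣ z - t
        · refine ⟨true, ?_⟩
          have hb : ¬ (p : ℤ) ^ (T + 1) ∣ z + t := by
            intro hb
            apply hTn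
            have := dvd_sub hb ha
            rwa [show z + t - (z - t) = 2 * t by ring] at this
          have := aux_dvd p hpz T ℓ _ _ (mul_comm (z - t) (z + t) ▸ h1) hb
          simpa [sg] using this
        · refine ⟨false, ?_⟩
          have := aux_dvd p hpz T ℓ _ _ h1 ha
          simpa [sg] using this
      obtain ⟨s, m, hm⟩ := h2
      have hpos : (0 : ℤ) < (p : ℤ) ^ T := pow_pos (by exact_mod_cast hp.pos) _
      have hm0 := Int.emod_nonneg m hpos.ne'
      have hm1 := Int.emod_lt_of_pos m hpos
      have hlt : (m % (p : ℤ) ^ T).toNat < p ^ T := by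
        zify; rw [Int.toNat_of_nonneg hm0]; exact hm1
      refine ⟨(s, ⟨_, hlt⟩), Subtype.ext ?_⟩
      change ((g _ : ℤ) : ZMod (p ^ ℓ)) = z
      rw [← sub_eq_zero, ← Int.cast_sub, key]
      simp only [g]
      rw [Int.toNat_of_nonneg hm0]
      refine ⟨-(m / (p : ℤ) ^ T), ?_⟩
      rw [hsplit]
      have := Int.emod_add_mul_ediv m ((p : ℤ) ^ T)
      linear_combination (p : ℤ) ^ (ℓ - T) * this - hm
  rw [← Nat.card_congr (Equiv.ofBijective f hf)]
  simp
end

section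
/- Let p be an odd prime, Δ an integer not divisible by p, and set ε = 1 if the image of Δ in ℤ/pℤ is a square and ε = −1 otherwise. Let t be a nonzero integer with p-adic valuation T. For a natural number ℓ let X_ℓ = N_ℓ / p^ℓ, where N_ℓ is the number of x ∈ ℤ/p^ℓℤ with Δ̄·x² = t̄². Then for every real z with |z| < 1, setting w = z/p and u = z²/p, the series ∑_{ℓ≥0} z^ℓ · X_ℓ converges with sum ((1+w)/(1−u)) · (1 − ((u − ε·w)/(1 − ε·w)) · u^T). -/
/-- the counting function, over integers -/
noncomputable def NN (p : ℕ) (Δ t : ℤ) (l : ℕ) : ℕ :=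
  Nat.card {x : ZMod (p ^ l) // (Δ : ZMod (p ^ l)) * x ^ 2 = (t : ZMod (p ^ l)) ^ 2}

open Classical in
theorem NN_eq (p : ℕ) (hp : p.Prime) (Δ t : ℤ) (l : ℕ) :
    NN p Δ t l = ((Finset.range (p ^ l)).filter
      (fun x : ℕ => ((p : ℤ) ^ l) ∣ Δ * (x : ℤ) ^ 2 - t ^ 2)).card := by
  have : NeZero (p ^ l) := ⟨pow_ne_zero _ hp.ne_zero⟩
  have key : ∀ x : ℕ, ((Δ : ZMod (p ^ l)) * (x : ZMod (p ^ l)) ^ 2 = (t : ZMod (p ^ l)) ^ 2) ↔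
      ((p : ℤ) ^ l) ∣ Δ * (x : ℤ) ^ 2 - t ^ 2 := by
    intro x
    have := ZMod.intCast_zmod_eq_zero_iff_dvd (Δ * (x : ℤ) ^ 2 - t ^ 2) (p ^ l)
    push_cast at this
    rw [← this, sub_eq_zero]
  rw [NN, Nat.card_eq_fintype_card, Fintype.card_subtype]
  refine Finset.card_bij (fun x _ => x.val) ?_ ?_ ?_
  · intro x hx
    simp only [Finset.mem_filter, Finset.mem_univ, true_and, Finset.mem_range] at hx ⊢
    refine ⟨ZMod.val_lt x, ?_⟩
    rw [← key, ZMod.natCast_zmod_val]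
    exact hx
  · intro x _ y _ h
    exact ZMod.val_injective _ h
  · intro b hb
    simp only [Finset.mem_filter, Finset.mem_range] at hb
    refine ⟨(b : ZMod (p ^ l)), ?_, ?_⟩
    · simp only [Finset.mem_filter, Finset.mem_univ, true_and]
      exact (key b).2 hb.2
    · exact ZMod.val_cast_of_lt hb.1

theorem count_periodic (P : ℕ → Prop) [DecidablePred P] (M : ℕ) (h : ∀ x, P (M + x) ↔ P x)
    (k : ℕ) : Nat.count P (k * M) = k * Nat.count P M := by
  induction k with
  | zero => simp
  | succ k ih =>
    rw [show (k + 1) * M = M + k * M by ring, Nat.count_add]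
    simp only [h]
    rw [ih]; ring

theorem dvd_of_sq (p : ℕ) (hp : p.Prime) (Δ : ℤ) (hΔ : ¬ (p : ℤ) ∣ Δ) (t x : ℤ)
    (h : (p : ℤ) ∣ Δ * x ^ 2 - (p * t) ^ 2) : (p : ℤ) ∣ x := by
  have hpi : Prime (p : ℤ) := Nat.prime_iff_prime_int.1 hp
  have h2 : (p : ℤ) ∣ Δ * x ^ 2 := by
    have : (p : ℤ) ∣ (p * t) ^ 2 := ⟨p * t ^ 2, by ring⟩
    simpa using dvd_add h this
  exact hpi.dvd_of_dvd_pow ((hpi.dvd_or_dvd h2).resolve_left hΔ)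

theorem NN_step (p : ℕ) (hp : p.Prime) (Δ : ℤ) (hΔ : ¬ (p : ℤ) ∣ Δ) (t : ℤ) (l : ℕ) :
    NN p Δ (p * t) (l + 2) = p * NN p Δ t l := by
  classical
  have hp0 : (p : ℤ) ≠ 0 := by exact_mod_cast hp.ne_zero
  rw [NN_eq p hp, NN_eq p hp, ← Nat.count_eq_card_filter_range (p := fun x : ℕ => ((p : ℤ) ^ l) ∣ Δ * (x : ℤ) ^ 2 - t ^ 2),
    ← count_periodic, Nat.count_eq_card_filter_range]
  · symm
    refine Finset.card_bij (fun x _ => p * x) ?_ ?_ ?_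
    · intro x hx
      simp only [Finset.mem_filter, Finset.mem_range] at hx ⊢
      refine ⟨?_, ?_⟩
      · calc p * x < p * (p * p ^ l) := Nat.mul_lt_mul_of_pos_left hx.1 hp.pos
          _ = p ^ (l + 2) := by ring
      · obtain ⟨c, hc⟩ := hx.2
        refine ⟨c, ?_⟩
        push_cast
        linear_combination (p : ℤ) ^ 2 * hc
    · intro x _ y _ h
      exact Nat.eq_of_mul_eq_mul_left hp.pos h
    · intro b hb
      simp only [Finset.mem_filter, Finset.mem_range] at hb
      have : (p : ℤ) ∣ b := dvd_of_sq p hp Δ hΔ t b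
        (dvd_trans (dvd_pow_self _ (by omega)) hb.2)
      obtain ⟨y, rfl⟩ := Int.natCast_dvd_natCast.1 this
      refine ⟨y, ?_, rfl⟩
      simp only [Finset.mem_filter, Finset.mem_range]
      refine ⟨?_, ?_⟩
      · have : p * y < p * (p * p ^ l) := by
          calc p * y < p ^ (l + 2) := hb.1
            _ = _ := by ring
        exact Nat.lt_of_mul_lt_mul_left this
      · obtain ⟨c, hc⟩ := hb.2
        refine ⟨c, ?_⟩
        push_cast at hc
        apply mul_left_cancel₀ (pow_ne_zero 2 hp0)
        linear_combination hc
  · intro x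
    have : Δ * ((p ^ l + x : ℕ) : ℤ) ^ 2 - t ^ 2 =
      (p : ℤ) ^ l * (Δ * (p ^ l + 2 * x)) + (Δ * (x : ℤ) ^ 2 - t ^ 2) := by push_cast; ring
    rw [this]
    exact (Int.dvd_add_right (dvd_mul_right _ _))

theorem NN_zero (p : ℕ) (hp : p.Prime) (Δ t : ℤ) : NN p Δ t 0 = 1 := by
  classical
  rw [NN_eq p hp]; simp

theorem NN_one (p : ℕ) (hp : p.Prime) (Δ : ℤ) (hΔ : ¬ (p : ℤ) ∣ Δ) (t : ℤ) :
    NN p Δ (p * t) 1 = 1 := by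
  classical
  rw [NN_eq p hp, Finset.card_eq_one]
  refine ⟨0, ?_⟩
  ext x
  simp only [Finset.mem_filter, Finset.mem_range, Finset.mem_singleton, pow_one]
  constructor
  · rintro ⟨h1, h2⟩
    exact Nat.eq_zero_of_dvd_of_lt (Int.natCast_dvd_natCast.1 (dvd_of_sq p hp Δ hΔ t x h2)) h1
  · rintro rfl
    exact ⟨hp.pos, ⟨-p * t ^ 2, by push_cast; ring⟩⟩

theorem hensel_sq (p : ℕ) (hp : p.Prime) (hp2 : p ≠ 2) (Δ : ℤ) (hΔ : ¬ (p : ℤ) ∣ Δ)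
    (hs : IsSquare (Δ : ZMod p)) (l : ℕ) : ∃ s : ℤ, (p : ℤ) ^ (l + 1) ∣ s ^ 2 - Δ := by
  have hpi : Prime (p : ℤ) := Nat.prime_iff_prime_int.1 hp
  induction l with
  | zero =>
    obtain ⟨r, hr⟩ := hs
    obtain ⟨s, rfl⟩ := ZMod.intCast_surjective r
    refine ⟨s, ?_⟩
    have := ZMod.intCast_zmod_eq_zero_iff_dvd (s ^ 2 - Δ) p
    rw [zero_add, pow_one, ← this]
    push_cast
    rw [hr]; ring
  | succ l ih =>
    obtain ⟨s, m, hm⟩ := ih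
    have hns : ¬ (p : ℤ) ∣ 2 * s := by
      intro h
      rcases hpi.dvd_or_dvd h with h | h
      · have : p ∣ 2 := by exact_mod_cast h
        exact hp2 ((Nat.prime_dvd_prime_iff_eq hp Nat.prime_two).1 this)
      · apply hΔ
        have h1 : (p : ℤ) ∣ s ^ 2 - Δ := hm ▸ (dvd_mul_of_dvd_left (dvd_pow_self _ (by omega)) _)
        have := dvd_sub (dvd_pow h (two_ne_zero)) h1
        simpa using this
    obtain ⟨a, b, hab⟩ := (hpi.coprime_iff_not_dvd).2 hns
    refine ⟨s - p ^ (l + 1) * (b * m), m * a + p ^ l * (b * m) ^ 2, ?_⟩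
    linear_combination hm - (p : ℤ) ^ (l + 1) * m * hab

theorem NN_unit_nonsq (p : ℕ) (hp : p.Prime) (Δ : ℤ)
    (t : ℤ) (ht : ¬ (p : ℤ) ∣ t) (hs : ¬ IsSquare (Δ : ZMod p)) (l : ℕ) :
    NN p Δ t (l + 1) = 0 := by
  classical
  have : Fact p.Prime := ⟨hp⟩
  rw [NN_eq p hp, Finset.card_eq_zero, Finset.filter_eq_empty_iff]
  intro x _ h
  have h1 : (p : ℤ) ∣ Δ * (x : ℤ) ^ 2 - t ^ 2 := dvd_trans (dvd_pow_self _ (by omega)) h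
  rw [← ZMod.intCast_zmod_eq_zero_iff_dvd] at h1
  rw [← ZMod.intCast_zmod_eq_zero_iff_dvd] at ht
  push_cast at h1
  apply hs
  have hx : (x : ZMod p) ≠ 0 := by
    intro hx
    rw [hx] at h1
    apply ht
    simpa using h1
  refine ⟨(t : ZMod p) / x, ?_⟩
  field_simp
  linear_combination h1

theorem NN_unit_sq (p : ℕ) (hp : p.Prime) (hp2 : p ≠ 2) (Δ : ℤ) (hΔ : ¬ (p : ℤ) ∣ Δ)
    (t : ℤ) (ht : ¬ (p : ℤ) ∣ t) (hs : IsSquare (Δ : ZMod p)) (l : ℕ) :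
    NN p Δ t (l + 1) = 2 := by
  classical
  have hpi : Prime (p : ℤ) := Nat.prime_iff_prime_int.1 hp
  obtain ⟨s, hsd⟩ := hensel_sq p hp hp2 Δ hΔ hs l
  have hnt : ¬ (p : ℤ) ∣ 2 * t := by
    intro h
    rcases hpi.dvd_or_dvd h with h | h
    · have : p ∣ 2 := by exact_mod_cast h
      exact hp2 ((Nat.prime_dvd_prime_iff_eq hp Nat.prime_two).1 this)
    · exact ht h
  have hns : ¬ (p : ℤ) ∣ s := by
    intro h
    apply hΔ
    have h1 : (p : ℤ) ∣ s ^ 2 - Δ := dvd_trans (dvd_pow_self _ (by omega)) hsd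
    simpa using dvd_sub (dvd_pow h (two_ne_zero)) h1
  obtain ⟨a, b, hab⟩ : IsCoprime ((p : ℤ) ^ (l + 1)) s :=
    ((hpi.coprime_iff_not_dvd).2 hns).pow_left
  have cst : ∀ n : ℤ, ((n : ℤ) : ZMod (p ^ (l + 1))) = 0 ↔ (p : ℤ) ^ (l + 1) ∣ n := by
    intro n
    rw [ZMod.intCast_zmod_eq_zero_iff_dvd]; push_cast; rfl
  have hsd' := (cst _).2 hsd
  have hpz := (cst _).2 (dvd_refl ((p : ℤ) ^ (l + 1)))
  have hab' := congrArg (fun n : ℤ => (n : ZMod (p ^ (l + 1)))) hab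
  have hpz' : ((p : ℤ) ^ (l + 1) : ZMod (p ^ (l + 1))) = 0 := by exact_mod_cast hpz
  push_cast at hsd' hab' hpz'
  rw [hpz', mul_zero, zero_add] at hab'
  rw [NN]
  have hset : {x : ZMod (p ^ (l + 1)) |
      (Δ : ZMod (p ^ (l + 1))) * x ^ 2 = (t : ZMod (p ^ (l + 1))) ^ 2} =
      {(b : ZMod (p ^ (l + 1))) * t, -((b : ZMod (p ^ (l + 1))) * t)} := by
    ext x
    simp only [Set.mem_ofPred_eq, Set.mem_insert_iff, Set.mem_singleton_iff]
    constructor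
    · intro hx
      obtain ⟨y, rfl⟩ := ZMod.intCast_surjective x
      have h1 : (p : ℤ) ^ (l + 1) ∣ (s * y - t) * (s * y + t) := by
        rw [← cst]; push_cast
        linear_combination (y : ZMod (p ^ (l + 1))) ^ 2 * hsd' + hx
      by_cases hd : (p : ℤ) ∣ s * y - t
      · have hd2 : ¬ (p : ℤ) ∣ s * y + t := by
          intro h
          apply hnt
          have := dvd_sub h hd
          ring_nf at this ⊢
          exact this
        have h2 := (((hpi.coprime_iff_not_dvd).2 hd2).pow_left (m := l + 1)).dvd_of_dvd_mul_right h1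
        rw [← cst] at h2; push_cast at h2
        left
        linear_combination (b : ZMod (p ^ (l + 1))) * h2 - (y : ZMod (p ^ (l + 1))) * hab'
      · have h2 := (((hpi.coprime_iff_not_dvd).2 hd).pow_left (m := l + 1)).dvd_of_dvd_mul_left h1
        rw [← cst] at h2; push_cast at h2
        right
        linear_combination (b : ZMod (p ^ (l + 1))) * h2 - (y : ZMod (p ^ (l + 1))) * hab'
    · have : (Δ : ZMod (p ^ (l + 1))) * (b * t) ^ 2 = (t : ZMod (p ^ (l + 1))) ^ 2 := by
        linear_combination -(b * t : ZMod (p ^ (l + 1))) ^ 2 * hsd' +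
          (t : ZMod (p ^ (l + 1))) ^ 2 * (b * s + 1) * hab'
      rintro (rfl | rfl)
      · exact this
      · rw [neg_sq]; exact this
  have : Nat.card {x : ZMod (p ^ (l + 1)) //
      (Δ : ZMod (p ^ (l + 1))) * x ^ 2 = (t : ZMod (p ^ (l + 1))) ^ 2} =
      Set.ncard {x : ZMod (p ^ (l + 1)) |
      (Δ : ZMod (p ^ (l + 1))) * x ^ 2 = (t : ZMod (p ^ (l + 1))) ^ 2} := rfl
  rw [this, hset, Set.ncard_pair]
  intro h
  apply hnt
  refine dvd_trans (dvd_pow_self _ (Nat.succ_ne_zero l)) ((cst _).1 ?_)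
  push_cast
  linear_combination (s : ZMod (p ^ (l + 1))) * h - 2 * (t : ZMod (p ^ (l + 1))) * hab'

open Classical in
theorem main_aux (p : ℕ) (hp : p.Prime) (hp2 : p ≠ 2) (Δ : ℤ) (hΔ : ¬ (p : ℤ) ∣ Δ)
    (ε : ℝ) (hε : ε = if IsSquare (Δ : ZMod p) then 1 else -1)
    (z : ℝ) (hz : |z| < 1) (w u : ℝ) (hw : w = z / p) (hu : u = z ^ 2 / p) (T : ℕ) :
    ∀ (t : ℤ) (_ : ¬ (p : ℤ) ∣ t),
    HasSum (fun ℓ : ℕ => z ^ ℓ * ((NN p Δ (p ^ T * t) ℓ : ℝ) / p ^ ℓ))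
      (((1 + w) / (1 - u)) * (1 - ((u - ε * w) / (1 - ε * w)) * u ^ T)) := by
  have hp1 : (1 : ℝ) < p := by exact_mod_cast hp.one_lt
  have hp0 : (p : ℝ) ≠ 0 := by positivity
  have hw1 : |w| < 1 := by
    rw [hw, abs_div, Nat.abs_cast, div_lt_one (by positivity)]
    linarith
  have hu1 : |u| < 1 := by
    rw [hu, abs_div, Nat.abs_cast, div_lt_one (by positivity), abs_pow]
    nlinarith [abs_nonneg z]
  have hu0 : 1 - u ≠ 0 := by linarith [(abs_lt.1 hu1).2] |> fun h : 0 < 1 - u => h.ne'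
  have hεw : 1 - ε * w ≠ 0 := by
    have : 0 < 1 - ε * w := by
      rw [hε]
      split_ifs <;> linarith [(abs_lt.1 hw1).1, (abs_lt.1 hw1).2]
    exact this.ne'
  intro t ht
  induction T with
  | zero =>
    have hN : ∀ l, (NN p Δ t (l + 1) : ℝ) = 1 + ε := by
      intro l
      rw [hε]
      split_ifs with hs
      · rw [NN_unit_sq p hp hp2 Δ hΔ t ht hs]; norm_num
      · rw [NN_unit_nonsq p hp Δ t ht hs]; norm_num
    rw [← hasSum_nat_add_iff' 1]
    have hg := (hasSum_geometric_of_abs_lt_one hw1).mul_left ((1 + ε) * w)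
    convert hg using 1
    · rfl
    · funext l
      rw [pow_zero, one_mul, hN, hw, div_pow]
      field_simp
      ring
    · rw [Finset.sum_range_one, pow_zero (p : ℤ), one_mul, NN_zero p hp]
      have hw0 : 1 - w ≠ 0 := by
        have : 0 < 1 - w := by linarith [(abs_lt.1 hw1).2]
        exact this.ne'
      have hε2 : ε = 1 ∨ ε = -1 := by
        rw [hε]; split_ifs <;> simp
      clear hN hg hε
      simp only [pow_zero, Nat.cast_one, mul_one, div_one]
      rcases hε2 with h | h
      · subst h
        rw [one_mul]
        field_simp
        ring
      · subst h
        have hw2 : 1 + w ≠ 0 := by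
          have : 0 < 1 + w := by linarith [(abs_lt.1 hw1).1]
          exact this.ne'
        rw [neg_one_mul, sub_neg_eq_add, sub_neg_eq_add]
        field_simp
        ring
  | succ T ih =>
    rw [← hasSum_nat_add_iff' 2]
    convert ih.mul_left u using 1
    · rfl
    · funext l
      rw [show (p : ℤ) ^ (T + 1) * t = p * (p ^ T * t) by ring, NN_step p hp Δ hΔ, hu]
      push_cast
      field_simp
      ring
    · rw [Finset.sum_range_succ, Finset.sum_range_one, NN_zero p hp,
        show (p : ℤ) ^ (T + 1) * t = p * (p ^ T * t) by ring, NN_one p hp Δ hΔ]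
      have : z ^ 1 * (((1 : ℕ) : ℝ) / (p : ℝ) ^ 1) = w := by rw [hw]; simp; ring
      rw [this]
      field_simp
      simp
      ring

open Classical in
theorem stmt_4 (p : ℕ) (hp : p.Prime) (hp2 : p ≠ 2) (Δ : ℤ) (hΔ : ¬ (p : ℤ) ∣ Δ)
    (ε : ℝ) (hε : ε = if IsSquare (Δ : ZMod p) then 1 else -1)
    (t : ℤ) (ht : t ≠ 0) (T : ℕ) (hT : padicValInt p t = T)
    (z : ℝ) (hz : |z| < 1) (w u : ℝ) (hw : w = z / p) (hu : u = z ^ 2 / p) :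
    HasSum
      (fun ℓ : ℕ => z ^ ℓ *
        ((Nat.card {x : ZMod (p ^ ℓ) //
            (Δ : ZMod (p ^ ℓ)) * x ^ 2 = (t : ZMod (p ^ ℓ)) ^ 2} : ℝ) / p ^ ℓ))
      (((1 + w) / (1 - u)) * (1 - ((u - ε * w) / (1 - ε * w)) * u ^ T)) := by
  have : Fact p.Prime := ⟨hp⟩
  obtain ⟨c, hc⟩ : (p : ℤ) ^ T ∣ t := by
    rw [padicValInt_dvd_iff]; right; exact hT.ge
  have hnc : ¬ (p : ℤ) ∣ c := by
    rintro ⟨d, rfl⟩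
    have : (p : ℤ) ^ (T + 1) ∣ t := ⟨d, by rw [hc]; ring⟩
    rw [padicValInt_dvd_iff] at this
    rcases this with h | h
    · exact ht h
    · omega
  have := main_aux p hp hp2 Δ hΔ ε hε z hz w u hw hu T c hnc
  rw [← hc] at this
  exact this
end

section
/- Let p be an odd prime, Δ an integer not divisible by p, and set ε = 1 if the image of Δ in ℤ/pℤ is a square and ε = −1 otherwise. For natural numbers T and ℓ, let N_{T,ℓ} be the number of x ∈ ℤ/p^ℓℤ with Δ̄·x² equal to the image of p^{2T} in ℤ/p^ℓℤ. Then for all real a, z with |a| < 1 and |z| < 1, setting w = z/p and u = z²/p, the double series indexed by (T,ℓ) ∈ ℕ×ℕ with terms a^T · z^ℓ · N_{T,ℓ}/p^ℓ converges with sum (1 − w²)(1 − ε·a·w) / ((1 − a)(1 − w)(1 − ε·w)(1 − a·u)). -/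
/-- The solution count of the statement. -/
noncomputable def solN (p : ℕ) (Δ : ℤ) (T l : ℕ) : ℕ :=
  Nat.card {x : ZMod (p ^ l) //
    (Δ : ZMod (p ^ l)) * x ^ 2 = ((p ^ (2 * T) : ℕ) : ZMod (p ^ l))}

open Classical in
lemma solN_eq (p : ℕ) (hp : p.Prime) (Δ : ℤ) (T l : ℕ) :
    solN p Δ T l = ((Finset.range (p ^ l)).filter
      (fun x : ℕ => (p : ℤ) ^ l ∣ Δ * (x : ℤ) ^ 2 - (p : ℤ) ^ (2 * T))).card := by
  haveI : NeZero (p ^ l) := ⟨pow_ne_zero _ hp.ne_zero⟩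
  have key : ∀ x : ℕ, ((Δ : ZMod (p ^ l)) * (x : ZMod (p ^ l)) ^ 2
      = ((p ^ (2 * T) : ℕ) : ZMod (p ^ l))) ↔
      (p : ℤ) ^ l ∣ Δ * (x : ℤ) ^ 2 - (p : ℤ) ^ (2 * T) := by
    intro x
    have h := ZMod.intCast_zmod_eq_zero_iff_dvd (Δ * (x : ℤ) ^ 2 - (p : ℤ) ^ (2 * T)) (p ^ l)
    rw [Nat.cast_pow] at h
    rw [← h, ← sub_eq_zero]
    push_cast
    rfl
  rw [solN, Nat.card_eq_fintype_card, Fintype.card_subtype]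
  refine Finset.card_nbij' (fun x => x.val) (fun n => (n : ZMod (p ^ l))) ?_ ?_ ?_ ?_
  · intro x hx
    simp only [Finset.coe_filter, Finset.mem_univ, true_and, Set.mem_setOf_eq] at hx
    simp only [Finset.coe_filter, Finset.mem_range, Set.mem_setOf_eq]
    refine ⟨ZMod.val_lt x, ?_⟩
    rw [← key, ZMod.natCast_zmod_val]
    exact hx
  · intro n hn
    simp only [Finset.coe_filter, Finset.mem_range, Set.mem_setOf_eq] at hn
    simp only [Finset.coe_filter, Finset.mem_univ, true_and, Set.mem_setOf_eq]
    exact (key n).2 hn.2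
  · intro x _
    simp
  · intro n hn
    simp only [Finset.coe_filter, Finset.mem_range, Set.mem_setOf_eq] at hn
    exact ZMod.val_cast_of_lt hn.1

lemma solN_zero (p : ℕ) (hp : p.Prime) (Δ : ℤ) (T : ℕ) : solN p Δ T 0 = 1 := by
  classical
  rw [solN_eq p hp]
  simp

lemma dvd_of_aux (p : ℕ) (hp : p.Prime) (Δ : ℤ) (hΔ : ¬ (p : ℤ) ∣ Δ) (T : ℕ) (x : ℕ)
    (h : (p : ℤ) ∣ Δ * (x : ℤ) ^ 2 - (p : ℤ) ^ (2 * (T + 1))) : p ∣ x := by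
  have hp' : Prime (p : ℤ) := Nat.prime_iff_prime_int.1 hp
  have h1 : (p : ℤ) ∣ Δ * (x : ℤ) ^ 2 := by
    have h2 : (p : ℤ) ∣ (p : ℤ) ^ (2 * (T + 1)) := dvd_pow_self _ (by omega)
    simpa using dvd_add h h2
  rcases hp'.dvd_or_dvd h1 with h | h
  · exact absurd h hΔ
  · exact_mod_cast hp'.dvd_of_dvd_pow h

lemma solN_one (p : ℕ) (hp : p.Prime) (Δ : ℤ) (hΔ : ¬ (p : ℤ) ∣ Δ) (T : ℕ) :
    solN p Δ (T + 1) 1 = 1 := by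
  classical
  rw [solN_eq p hp, Finset.card_eq_one]
  refine ⟨0, ?_⟩
  ext x
  simp only [Finset.mem_filter, Finset.mem_range, Finset.mem_singleton, pow_one]
  constructor
  · rintro ⟨h1, h2⟩
    exact Nat.eq_zero_of_dvd_of_lt (dvd_of_aux p hp Δ hΔ T x h2) h1
  · rintro rfl
    refine ⟨hp.pos, ?_⟩
    have h2 : (p : ℤ) ∣ (p : ℤ) ^ (2 * (T + 1)) := dvd_pow_self _ (by omega)
    simpa using h2

lemma solN_rec (p : ℕ) (hp : p.Prime) (Δ : ℤ) (hΔ : ¬ (p : ℤ) ∣ Δ) (T l : ℕ) :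
    solN p Δ (T + 1) (l + 2) = p * solN p Δ T l := by
  classical
  have hpos : 0 < p := hp.pos
  have hq : 0 < p ^ l := pow_pos hpos l
  have hp0 : (p : ℤ) ≠ 0 := by exact_mod_cast hp.ne_zero
  -- divisibility for multiples of `p`
  have k1 : ∀ y : ℕ, (p : ℤ) ^ (l + 2) ∣
      Δ * ((p * y : ℕ) : ℤ) ^ 2 - (p : ℤ) ^ (2 * (T + 1)) ↔
      (p : ℤ) ^ l ∣ Δ * (y : ℤ) ^ 2 - (p : ℤ) ^ (2 * T) := by
    intro y
    have e1 : Δ * ((p * y : ℕ) : ℤ) ^ 2 - (p : ℤ) ^ (2 * (T + 1)) =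
        (p : ℤ) ^ 2 * (Δ * (y : ℤ) ^ 2 - (p : ℤ) ^ (2 * T)) := by
      push_cast; ring
    have e2 : (p : ℤ) ^ (l + 2) = (p : ℤ) ^ 2 * (p : ℤ) ^ l := by ring
    rw [e1, e2]
    exact mul_dvd_mul_iff_left (pow_ne_zero 2 hp0)
  -- periodicity
  have k2 : ∀ x c : ℕ, (p : ℤ) ^ l ∣ Δ * ((x + p ^ l * c : ℕ) : ℤ) ^ 2 - (p : ℤ) ^ (2 * T) ↔
      (p : ℤ) ^ l ∣ Δ * (x : ℤ) ^ 2 - (p : ℤ) ^ (2 * T) := by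
    intro x c
    have e : Δ * ((x + p ^ l * c : ℕ) : ℤ) ^ 2 - (p : ℤ) ^ (2 * T) =
        (Δ * (x : ℤ) ^ 2 - (p : ℤ) ^ (2 * T)) +
          (p : ℤ) ^ l * (Δ * (2 * x * c + p ^ l * c ^ 2)) := by
      push_cast; ring
    rw [e]
    exact dvd_add_left (dvd_mul_right _ _)
  rw [solN_eq p hp, solN_eq p hp]
  conv_rhs => rw [← Finset.card_range p, mul_comm, ← Finset.card_product]
  symm
  refine Finset.card_nbij' (fun q => p * (q.1 + p ^ l * q.2))
    (fun x => ((x / p) % (p ^ l), (x / p) / (p ^ l))) ?_ ?_ ?_ ?_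
  · rintro ⟨x, c⟩ hx
    simp only [Finset.coe_product, Finset.coe_filter, Finset.mem_range, Set.mem_prod,
      Set.mem_setOf_eq, Finset.coe_range, Set.mem_Iio, Finset.card_range] at hx
    simp only [Finset.coe_filter, Finset.mem_range, Set.mem_setOf_eq]
    obtain ⟨⟨h1, h2⟩, h3⟩ := hx
    refine ⟨?_, (k1 _).2 ((k2 _ _).2 h2)⟩
    have : x + p ^ l * c < p ^ l * p := by nlinarith
    calc p * (x + p ^ l * c) < p * (p ^ l * p) := Nat.mul_lt_mul_of_pos_left this hpos
      _ = p ^ (l + 2) := by ring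
  · intro x hx
    simp only [Finset.coe_filter, Finset.mem_range, Set.mem_setOf_eq] at hx
    simp only [Finset.coe_product, Finset.coe_filter, Finset.mem_range, Set.mem_prod,
      Set.mem_setOf_eq, Finset.coe_range, Set.mem_Iio, Finset.card_range]
    obtain ⟨h1, h2⟩ := hx
    obtain ⟨y, rfl⟩ := dvd_of_aux p hp Δ hΔ T x ((dvd_pow_self _ (by omega)).trans h2)
    rw [Nat.mul_div_cancel_left _ hpos]
    have h3 := (k1 _).1 h2
    refine ⟨⟨Nat.mod_lt _ hq, ?_⟩, ?_⟩
    · rw [← k2 _ (y / p ^ l), Nat.mod_add_div]; exact h3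
    · rw [Nat.div_lt_iff_lt_mul hq]
      have : p * y < p * (p * p ^ l) := by
        calc p * y < p ^ (l + 2) := h1
          _ = _ := by ring
      exact Nat.lt_of_mul_lt_mul_left this
  · rintro ⟨x, c⟩ hx
    simp only [Finset.coe_product, Finset.coe_filter, Finset.mem_range, Set.mem_prod,
      Set.mem_setOf_eq, Finset.coe_range, Set.mem_Iio, Finset.card_range] at hx
    obtain ⟨⟨h1, h2⟩, h3⟩ := hx
    simp only [Nat.mul_div_cancel_left _ hpos, Prod.mk.injEq]
    refine ⟨?_, ?_⟩
    · rw [Nat.add_mul_mod_self_left, Nat.mod_eq_of_lt h1]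
    · rw [Nat.add_mul_div_left _ _ hq, Nat.div_eq_of_lt h1, zero_add]
  · intro x hx
    simp only [Finset.coe_filter, Finset.mem_range, Set.mem_setOf_eq] at hx
    obtain ⟨h1, h2⟩ := hx
    obtain ⟨y, rfl⟩ := dvd_of_aux p hp Δ hΔ T x ((dvd_pow_self _ (by omega)).trans h2)
    simp only [Nat.mul_div_cancel_left _ hpos, Nat.mod_add_div]

/-- Hensel lifting for `Δ x² = 1`. -/
lemma exists_lift (p : ℕ) (hp : p.Prime) (hp2 : p ≠ 2) (Δ : ℤ)
    (x₀ : ℤ) (h₀ : (p : ℤ) ∣ Δ * x₀ ^ 2 - 1) (l : ℕ) :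
    ∃ x : ℤ, (p : ℤ) ^ (l + 1) ∣ Δ * x ^ 2 - 1 := by
  obtain ⟨h, hh⟩ : Odd p := hp.odd_of_ne_two hp2
  induction l with
  | zero => exact ⟨x₀, by simpa using h₀⟩
  | succ l ih =>
    obtain ⟨x, k, hk⟩ := ih
    set e : ℤ := (p : ℤ) ^ (l + 1) * k with he
    have hx : Δ * x ^ 2 = 1 + e := by linarith
    have hpz : (p : ℤ) = 2 * h + 1 := by exact_mod_cast hh
    refine ⟨x * (1 - e * (h + 1)), ?_⟩
    have e1 : Δ * (x * (1 - e * (h + 1))) ^ 2 - 1 =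
        - (p * e) + e * e * (-(1 + p) + (h + 1) ^ 2 * (1 + e)) := by
      have : Δ * (x * (1 - e * (h + 1))) ^ 2 = (Δ * x ^ 2) * (1 - e * (h + 1)) ^ 2 := by ring
      rw [this, hx, hpz]
      ring
    rw [e1]
    have d1 : (p : ℤ) ^ (l + 1 + 1) ∣ p * e := ⟨k, by rw [he]; ring⟩
    have d2 : (p : ℤ) ^ (l + 1 + 1) ∣ e * e := ⟨(p : ℤ) ^ l * k * k, by rw [he]; ring⟩
    exact dvd_add ((dvd_neg).2 d1) (d2.mul_right _)

lemma isUnit_of_not_dvd (p : ℕ) (hp : p.Prime) (l : ℕ) (n : ℤ) (h : ¬ (p : ℤ) ∣ n) :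
    IsUnit (n : ZMod (p ^ l)) := by
  have hc : IsCoprime n ((p ^ l : ℕ) : ℤ) := by
    push_cast
    exact (((Nat.prime_iff_prime_int.1 hp).coprime_iff_not_dvd).2 h).symm.pow_right
  obtain ⟨a, b, hab⟩ := hc
  have h2 := congrArg (Int.cast : ℤ → ZMod (p ^ l)) hab
  rw [Int.cast_add, Int.cast_mul, Int.cast_mul, Int.cast_natCast, ZMod.natCast_self, mul_zero,
    add_zero, Int.cast_one] at h2
  exact IsUnit.of_mul_eq_one_right _ h2

open Classical in
lemma solN_T0 (p : ℕ) (hp : p.Prime) (hp2 : p ≠ 2) (Δ : ℤ) (hΔ : ¬ (p : ℤ) ∣ Δ) (l : ℕ) :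
    solN p Δ 0 (l + 1) = if IsSquare (Δ : ZMod p) then 2 else 0 := by
  haveI : Fact p.Prime := ⟨hp⟩
  have hp' : Prime (p : ℤ) := Nat.prime_iff_prime_int.1 hp
  haveI : NeZero (p ^ (l + 1)) := ⟨pow_ne_zero _ hp.ne_zero⟩
  have hΔ0 : (Δ : ZMod p) ≠ 0 := by
    rwa [Ne, ZMod.intCast_zmod_eq_zero_iff_dvd]
  have h2 : ¬ (p : ℤ) ∣ 2 := by
    intro h
    have h' : p ∣ 2 := by exact_mod_cast h
    exact hp2 ((Nat.prime_dvd_prime_iff_eq hp Nat.prime_two).1 h')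
  split_ifs with hs
  · obtain ⟨r, hr⟩ := hs
    have hr0 : r ≠ 0 := by rintro rfl; simp at hr; exact hΔ0 hr
    obtain ⟨x₀, hx₀⟩ := ZMod.intCast_surjective (r⁻¹)
    obtain ⟨x, hx⟩ := exists_lift p hp hp2 Δ x₀ (by
      rw [← ZMod.intCast_zmod_eq_zero_iff_dvd]
      push_cast
      rw [hx₀, hr]; field_simp; simp) l
    have hpx : ¬ (p : ℤ) ∣ x := by
      intro h
      have h1 : (p : ℤ) ∣ Δ * x ^ 2 - 1 := (dvd_pow_self _ (by omega)).trans hx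
      have h3 : (p : ℤ) ∣ Δ * x ^ 2 := (dvd_pow h (by norm_num)).mul_left _
      have h4 := dvd_sub h3 h1
      rw [sub_sub_cancel] at h4
      exact hp'.not_unit (isUnit_of_dvd_one h4)
    have hxZ : (Δ : ZMod (p ^ (l + 1))) * (x : ZMod (p ^ (l + 1))) ^ 2 = 1 := by
      rw [← sub_eq_zero]
      have h := (ZMod.intCast_zmod_eq_zero_iff_dvd (Δ * x ^ 2 - 1) (p ^ (l + 1))).2
        (by push_cast; exact hx)
      push_cast at h
      exact h
    have hΔu := isUnit_of_not_dvd p hp (l + 1) Δ hΔ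
    have hne : (x : ZMod (p ^ (l + 1))) ≠ -x := by
      intro h
      have h3 : ((2 * x : ℤ) : ZMod (p ^ (l + 1))) = 0 := by
        push_cast
        linear_combination h
      rw [ZMod.intCast_zmod_eq_zero_iff_dvd] at h3
      push_cast at h3
      rcases hp'.dvd_or_dvd ((dvd_pow_self _ (by omega)).trans h3) with h | h
      · exact h2 h
      · exact hpx h
    rw [solN, Nat.card_eq_fintype_card, Fintype.card_subtype, Finset.card_eq_two]
    refine ⟨x, -x, hne, ?_⟩
    ext y
    simp only [Finset.mem_filter, Finset.mem_univ, true_and, Finset.mem_insert,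
      Finset.mem_singleton, mul_zero, pow_zero, Nat.cast_one]
    constructor
    · intro hy
      obtain ⟨Y, rfl⟩ := ZMod.intCast_surjective y
      have h3 : ((Y : ZMod (p ^ (l + 1))) - x) * (Y + x) = 0 := by
        apply hΔu.mul_left_cancel
        linear_combination hy - hxZ
      by_cases hd : (p : ℤ) ∣ Y + x
      · right
        have hd' : ¬ (p : ℤ) ∣ Y - x := by
          intro hd'
          have h4 := dvd_sub hd hd'
          have h5 : Y + x - (Y - x) = 2 * x := by ring
          rw [h5] at h4
          rcases hp'.dvd_or_dvd h4 with h | h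
          · exact h2 h
          · exact hpx h
        have hu := isUnit_of_not_dvd p hp (l + 1) _ hd'
        push_cast at hu
        exact eq_neg_of_add_eq_zero_left ((hu.mul_right_eq_zero).1 h3)
      · left
        have hu := isUnit_of_not_dvd p hp (l + 1) _ hd
        push_cast at hu
        exact sub_eq_zero.1 ((hu.mul_left_eq_zero).1 h3)
    · rintro (rfl | rfl)
      · exact hxZ
      · rw [neg_sq]; exact hxZ
  · rw [solN, Nat.card_eq_zero]
    left
    refine ⟨fun ⟨y, hy⟩ => hs ?_⟩
    obtain ⟨Y, rfl⟩ := ZMod.intCast_surjective y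
    have h3 : (p : ℤ) ^ (l + 1) ∣ Δ * Y ^ 2 - 1 := by
      have h := (ZMod.intCast_zmod_eq_zero_iff_dvd (Δ * Y ^ 2 - 1) (p ^ (l + 1))).1 (by
        push_cast
        simp only [mul_zero, pow_zero, Nat.cast_one] at hy
        rw [hy, sub_self])
      push_cast at h
      exact h
    have h4 := (ZMod.intCast_zmod_eq_zero_iff_dvd (Δ * Y ^ 2 - 1) p).2
      ((dvd_pow_self _ (by omega)).trans h3)
    push_cast at h4
    have hY : (Y : ZMod p) ≠ 0 := by
      intro h; rw [h] at h4; simp at h4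
    refine ⟨(Y : ZMod p)⁻¹, ?_⟩
    field_simp
    linear_combination h4

lemma solN_le (p : ℕ) (hp : p.Prime) (Δ : ℤ) (T l : ℕ) : solN p Δ T l ≤ p ^ l := by
  classical
  rw [solN_eq p hp]
  exact (Finset.card_filter_le _ _).trans (by simp)

open Classical in
theorem stmt_6 (p : ℕ) (hp : p.Prime) (hp2 : p ≠ 2) (Δ : ℤ) (hΔ : ¬ (p : ℤ) ∣ Δ)
    (ε : ℝ) (hε : ε = if IsSquare (Δ : ZMod p) then 1 else -1)
    (a z : ℝ) (ha : |a| < 1) (hz : |z| < 1)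
    (w u : ℝ) (hw : w = z / p) (hu : u = z ^ 2 / p) :
    HasSum
      (fun Tℓ : ℕ × ℕ => a ^ Tℓ.1 * z ^ Tℓ.2 *
        ((Nat.card {x : ZMod (p ^ Tℓ.2) //
            (Δ : ZMod (p ^ Tℓ.2)) * x ^ 2 = ((p ^ (2 * Tℓ.1) : ℕ) : ZMod (p ^ Tℓ.2))} : ℝ)
          / p ^ Tℓ.2))
      ((1 - w ^ 2) * (1 - ε * a * w) / ((1 - a) * (1 - w) * (1 - ε * w) * (1 - a * u))) := by
  have hp0 : (0 : ℝ) < p := by exact_mod_cast hp.pos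
  have hp1 : (1 : ℝ) ≤ p := by exact_mod_cast hp.one_lt.le
  have hwl : |w| < 1 := by
    rw [hw, abs_div, abs_of_pos hp0, div_lt_one hp0]; linarith
  have hz2 : |z ^ 2| < 1 := by
    rw [abs_pow]; exact pow_lt_one₀ (abs_nonneg _) hz (by norm_num)
  have hul : |u| < 1 := by
    rw [hu, abs_div, abs_of_pos hp0, div_lt_one hp0]; linarith
  have hε2 : ε = 1 ∨ ε = -1 := by rw [hε]; split_ifs <;> simp
  have hεw : |ε * w| < 1 := by rcases hε2 with h | h <;> simpa [h] using hwl
  have hau : |a * u| < 1 := by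
    rw [abs_mul]; nlinarith [abs_nonneg a, abs_nonneg u]
  have n1 : 1 - a ≠ 0 := by linarith [(abs_lt.1 ha).2]
  have n2 : 1 - w ≠ 0 := by linarith [(abs_lt.1 hwl).2]
  have n3 : 1 - ε * w ≠ 0 := by linarith [(abs_lt.1 hεw).2]
  have n4 : 1 - a * u ≠ 0 := by linarith [(abs_lt.1 hau).2]
  -- the row terms
  set g : ℕ → ℕ → ℝ := fun T l => z ^ l * ((solN p Δ T l : ℝ) / p ^ l) with hg
  have hfun : (fun Tℓ : ℕ × ℕ => a ^ Tℓ.1 * z ^ Tℓ.2 *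
        ((Nat.card {x : ZMod (p ^ Tℓ.2) //
            (Δ : ZMod (p ^ Tℓ.2)) * x ^ 2 = ((p ^ (2 * Tℓ.1) : ℕ) : ZMod (p ^ Tℓ.2))} : ℝ)
          / p ^ Tℓ.2)) = fun Tℓ : ℕ × ℕ => a ^ Tℓ.1 * g Tℓ.1 Tℓ.2 := by
    funext q
    simp only [hg, solN]
    rw [mul_assoc]
  rw [hfun]
  have hsum : Summable (fun Tℓ : ℕ × ℕ => a ^ Tℓ.1 * g Tℓ.1 Tℓ.2) := by
    have hs := (summable_geometric_of_lt_one (abs_nonneg a) ha).mul_of_nonneg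
      (summable_geometric_of_lt_one (abs_nonneg z) hz)
      (fun _ => by positivity) (fun _ => by positivity)
    refine Summable.of_norm_bounded hs ?_
    rintro ⟨T, l⟩
    have hle : (solN p Δ T l : ℝ) / p ^ l ≤ 1 := by
      rw [div_le_one (by positivity)]
      exact_mod_cast solN_le p hp Δ T l
    have h0 : (0 : ℝ) ≤ (solN p Δ T l : ℝ) / p ^ l := by positivity
    simp only [hg, Real.norm_eq_abs, abs_mul, abs_pow, abs_of_nonneg h0]
    refine mul_le_mul_of_nonneg_left ?_ (by positivity)
    exact mul_le_of_le_one_right (by positivity) hle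
  -- row sums
  obtain ⟨F, hF0, hFs⟩ : ∃ F : ℕ → ℝ, F 0 = 1 + (1 + ε) * (w * (1 - w)⁻¹) ∧
      ∀ T, F (T + 1) = 1 + w + u * F T :=
    ⟨fun T => Nat.rec (1 + (1 + ε) * (w * (1 - w)⁻¹)) (fun _ r => 1 + w + u * r) T,
      rfl, fun _ => rfl⟩
  have hrow : ∀ T, HasSum (g T) (F T) := by
    intro T
    induction T with
    | zero =>
      rw [hF0, ← hasSum_nat_add_iff' 1]
      have e : ∀ l, g 0 (l + 1) = (1 + ε) * (w * w ^ l) := by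
        intro l
        have h := solN_T0 p hp hp2 Δ hΔ l
        have h' : (solN p Δ 0 (l + 1) : ℝ) = 1 + ε := by
          rw [h, hε]; split_ifs <;> norm_num
        simp only [hg]
        rw [h', hw, ← pow_succ', div_pow]
        ring
      simp only [e, Finset.sum_range_one]
      have e0 : g 0 0 = 1 := by simp [hg, solN_zero p hp]
      rw [e0, add_sub_cancel_left]
      exact ((hasSum_geometric_of_abs_lt_one hwl).mul_left w).mul_left (1 + ε)
    | succ T ih =>
      rw [hFs, ← hasSum_nat_add_iff' 2]
      have e : ∀ l, g (T + 1) (l + 2) = u * g T l := by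
        intro l
        simp only [hg]
        rw [solN_rec p hp Δ hΔ, hu]
        push_cast
        field_simp
        ring
      have e0 : g (T + 1) 0 = 1 := by simp [hg, solN_zero p hp]
      have e1 : g (T + 1) 1 = w := by simp [hg, solN_one p hp Δ hΔ, hw, div_eq_mul_inv]
      simp only [e, Finset.sum_range_succ, Finset.sum_range_zero, e0, e1, zero_add]
      rw [add_sub_cancel_left]
      exact ih.mul_left u
  obtain ⟨S, hS⟩ := hsum
  have hcol : HasSum (fun T => a ^ T * F T) S :=
    hS.prod_fiberwise (fun T => (hrow T).mul_left (a ^ T))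
  have hshift : HasSum (fun T => a ^ (T + 1) * F (T + 1)) (S - F 0) := by
    have h := (hasSum_nat_add_iff' 1).2 hcol
    simpa using h
  have hshift2 : HasSum (fun T => a ^ (T + 1) * F (T + 1))
      (a * (1 + w) * (1 - a)⁻¹ + a * u * S) := by
    have h := ((hasSum_geometric_of_abs_lt_one ha).mul_left (a * (1 + w))).add
      (hcol.mul_left (a * u))
    refine h.congr_fun ?_
    intro T
    rw [hFs]; ring
  have hE := hshift.unique hshift2
  have hSv : S = (1 - w ^ 2) * (1 - ε * a * w) /
      ((1 - a) * (1 - w) * (1 - ε * w) * (1 - a * u)) := by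
    have hE' : S * (1 - a * u) = 1 + (1 + ε) * (w * (1 - w)⁻¹) + a * (1 + w) * (1 - a)⁻¹ := by
      rw [hF0] at hE; linarith
    have hS2 : S = (1 + (1 + ε) * (w * (1 - w)⁻¹) + a * (1 + w) * (1 - a)⁻¹) / (1 - a * u) := by
      rw [eq_div_iff n4]; exact hE'
    rw [hS2]
    have hεε : ε ^ 2 = 1 := by rcases hε2 with h | h <;> simp [h]
    rw [div_eq_div_iff n4 (mul_ne_zero (mul_ne_zero (mul_ne_zero n1 n2) n3) n4)]
    field_simp
    rcases hε2 with h | h <;> rw [h] <;> ring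
  rw [← hSv]
  exact hS
end

section
/- Let p be an odd prime and Δ an integer not divisible by p whose image in ℤ/pℤ is not a square. Let ℓ ≥ 1 and let η be a unit of ℤ/p^ℓℤ. Then the number of pairs (x, y) ∈ (ℤ/p^ℓℤ)² with x² − Δ̄·y² = η is exactly p^ℓ + p^{ℓ−1}. -/
theorem aux_unit (p : ℕ) (hp : p.Prime) (l : ℕ) (hl : 1 ≤ l) (x : ZMod (p ^ l)) :
    IsUnit x ↔ ZMod.castHom (dvd_pow_self p (by omega : l ≠ 0)) (ZMod p) x ≠ 0 := by
  have : NeZero (p ^ l) := ⟨(pow_pos hp.pos l).ne'⟩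
  obtain ⟨n, rfl⟩ : ∃ n : ℕ, (n : ZMod (p ^ l)) = x := ⟨x.val, ZMod.natCast_zmod_val x⟩
  rw [ZMod.isUnit_iff_coprime, map_natCast, Ne, ZMod.natCast_eq_zero_iff,
    Nat.coprime_pow_right_iff (by omega), Nat.coprime_comm, hp.coprime_iff_not_dvd]

theorem aux_sq (p : ℕ) (hp : p.Prime) (hp2 : p ≠ 2) (l : ℕ) (hl : 1 ≤ l) (x : ZMod (p ^ l))
    (hx : ZMod.castHom (dvd_pow_self p (by omega : l ≠ 0)) (ZMod p) x = 1) : ∃ c, x = c ^ 2 := by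
  have : NeZero (p ^ l) := ⟨(pow_pos hp.pos l).ne'⟩
  obtain ⟨n, rfl⟩ : ∃ n : ℕ, (n : ZMod (p ^ l)) = x := ⟨x.val, ZMod.natCast_zmod_val x⟩
  rw [map_natCast] at hx
  have h1 : (p : ℤ) ∣ (n : ℤ) - 1 := by
    rw [← ZMod.intCast_zmod_eq_zero_iff_dvd] ; push_cast; rw [hx]; simp
  have h2 := dvd_sub_pow_of_dvd_sub (R := ℤ) (p := p) h1 (l - 1)
  have h3 : ((n : ZMod (p ^ l))) ^ p ^ (l - 1) = 1 := by
    rw [Nat.sub_add_cancel hl] at h2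
    have := (ZMod.intCast_zmod_eq_zero_iff_dvd _ (p ^ l)).2 (by push_cast; exact h2)
    push_cast at this
    rw [one_pow] at this
    exact sub_eq_zero.1 this
  obtain ⟨k, hk⟩ := (hp.odd_of_ne_two hp2).pow (n := l - 1)
  refine ⟨(n : ZMod (p ^ l)) ^ (k + 1), ?_⟩
  rw [← pow_mul, show (k + 1) * 2 = p ^ (l - 1) + 1 by omega, pow_succ, h3, one_mul]

theorem aux_norm (p : ℕ) (hp : p.Prime) (D : ZMod p) (hns : ¬ IsSquare D) (x y : ZMod p) :
    x ^ 2 - D * y ^ 2 = 0 ↔ x = 0 ∧ y = 0 := by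
  have : Fact p.Prime := ⟨hp⟩
  constructor
  · intro h
    by_cases hy : y = 0
    · subst hy
      simpa using h
    · exact absurd ⟨x / y, by field_simp; linear_combination -h⟩ hns
  · rintro ⟨rfl, rfl⟩; simp

theorem aux_exists (p : ℕ) (hp : p.Prime) (hp2 : p ≠ 2) (D : ℤ)
    (hns : ¬ IsSquare (D : ZMod p)) (l : ℕ) (hl : 1 ≤ l) (u : (ZMod (p ^ l))ˣ) :
    ∃ a b : ZMod (p ^ l), a ^ 2 - (D : ZMod (p ^ l)) * b ^ 2 = u := by
  have : Fact p.Prime := ⟨hp⟩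
  have hD : (D : ZMod p) ≠ 0 := fun h => hns (h ▸ IsSquare.zero)
  set f := ZMod.castHom (dvd_pow_self p (by omega : l ≠ 0)) (ZMod p) with hf
  have hfs : Function.Surjective f := ZMod.castHom_surjective _
  obtain ⟨a, b, hab⟩ : ∃ a b : ZMod p, a ^ 2 - (D : ZMod p) * b ^ 2 = f u := by
    obtain ⟨a, b, hab⟩ := FiniteField.exists_root_sum_quadratic (R := ZMod p)
      (f := Polynomial.C 1 * Polynomial.X ^ 2 + Polynomial.C 0 * Polynomial.X
        + Polynomial.C (-(f u)))
      (g := Polynomial.C (-(D : ZMod p)) * Polynomial.X ^ 2 + Polynomial.C 0 * Polynomial.X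
        + Polynomial.C 0)
      (Polynomial.degree_quadratic one_ne_zero)
      (Polynomial.degree_quadratic (neg_ne_zero.2 hD))
      (by rw [ZMod.card]; exact (Nat.odd_iff.1 (hp.odd_of_ne_two hp2)))
    refine ⟨a, b, ?_⟩
    simp at hab
    linear_combination hab
  obtain ⟨a, rfl⟩ := hfs a
  obtain ⟨b, rfl⟩ := hfs b
  have hn : f (a ^ 2 - (D : ZMod (p ^ l)) * b ^ 2) = f u := by
    rw [← hab]; simp
  have hu : f u ≠ 0 := (aux_unit p hp l hl _).1 u.isUnit
  obtain ⟨v, hv⟩ := (aux_unit p hp l hl (a ^ 2 - (D : ZMod (p ^ l)) * b ^ 2)).2 (hn ▸ hu)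
  obtain ⟨c, hc⟩ := aux_sq p hp hp2 l hl ((u : ZMod (p ^ l)) * (v⁻¹ : (ZMod (p ^ l))ˣ)) (by
    have h : f ((v : ZMod (p ^ l)) * (v⁻¹ : (ZMod (p ^ l))ˣ)) = 1 := by simp
    rw [← hf, map_mul, ← hn, ← hv, ← map_mul, h])
  refine ⟨c * a, c * b, ?_⟩
  have h : (v : ZMod (p ^ l)) * (v⁻¹ : (ZMod (p ^ l))ˣ) = 1 := by simp
  linear_combination (-c ^ 2) * hv - (v : ZMod (p ^ l)) * hc + u * h

theorem aux_equiv {R : Type*} [CommRing R] (D : R) (u : Rˣ) (a b : R)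
    (h : a ^ 2 - D * b ^ 2 = u) :
    Nat.card {xy : R × R // xy.1 ^ 2 - D * xy.2 ^ 2 = u} =
      Nat.card {xy : R × R // xy.1 ^ 2 - D * xy.2 ^ 2 = 1} := by
  have hu : (u : R) * (u⁻¹ : Rˣ) = 1 := by simp
  generalize ((u⁻¹ : Rˣ) : R) = w at hu
  rw [← h] at hu ⊢
  refine Nat.card_congr ⟨fun z => ⟨(w * (a * z.1.1 - D * b * z.1.2), w * (a * z.1.2 - b * z.1.1)), ?_⟩,
    fun z => ⟨(a * z.1.1 + D * b * z.1.2, a * z.1.2 + b * z.1.1), ?_⟩, ?_, ?_⟩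
  · obtain ⟨⟨x, y⟩, hz⟩ := z
    simp only at hz ⊢
    linear_combination w ^ 2 * (a ^ 2 - D * b ^ 2) * hz + (w * (a ^ 2 - D * b ^ 2) + 1) * hu
  · obtain ⟨⟨x, y⟩, hz⟩ := z
    simp only at hz ⊢
    linear_combination (a ^ 2 - D * b ^ 2) * hz
  · rintro ⟨⟨x, y⟩, hz⟩
    ext
    · simp only; linear_combination x * hu
    · simp only; linear_combination y * hu
  · rintro ⟨⟨x, y⟩, hz⟩
    ext
    · simp only; linear_combination x * hu
    · simp only; linear_combination y * hu

theorem stmt_7 (p : ℕ) (hp : p.Prime) (hp2 : p ≠ 2) (Δ : ℤ) (hΔ : ¬ (p : ℤ) ∣ Δ)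
    (hns : ¬ IsSquare (Δ : ZMod p)) (ℓ : ℕ) (hℓ : 1 ≤ ℓ) (η : (ZMod (p ^ ℓ))ˣ) :
    Nat.card {xy : ZMod (p ^ ℓ) × ZMod (p ^ ℓ) //
        xy.1 ^ 2 - (Δ : ZMod (p ^ ℓ)) * xy.2 ^ 2 = (η : ZMod (p ^ ℓ))}
      = p ^ ℓ + p ^ (ℓ - 1) := by
  classical
  have : NeZero (p ^ ℓ) := ⟨(pow_pos hp.pos ℓ).ne'⟩
  have key : ∀ u : (ZMod (p ^ ℓ))ˣ, Nat.card {xy : ZMod (p ^ ℓ) × ZMod (p ^ ℓ) //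
        xy.1 ^ 2 - (Δ : ZMod (p ^ ℓ)) * xy.2 ^ 2 = u} = Nat.card {xy : ZMod (p ^ ℓ) × ZMod (p ^ ℓ) //
        xy.1 ^ 2 - (Δ : ZMod (p ^ ℓ)) * xy.2 ^ 2 = 1} := by
    intro u
    obtain ⟨a, b, h⟩ := aux_exists p hp hp2 Δ hns ℓ hℓ u
    exact aux_equiv _ u a b h
  rw [key η]
  set c := Nat.card {xy : ZMod (p ^ ℓ) × ZMod (p ^ ℓ) //
        xy.1 ^ 2 - (Δ : ZMod (p ^ ℓ)) * xy.2 ^ 2 = 1} with hc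
  have hU : Nat.card {xy : ZMod (p ^ ℓ) × ZMod (p ^ ℓ) //
      IsUnit (xy.1 ^ 2 - (Δ : ZMod (p ^ ℓ)) * xy.2 ^ 2)} = p ^ (ℓ - 1) * (p - 1) * c := by
    have e : {xy : ZMod (p ^ ℓ) × ZMod (p ^ ℓ) //
        IsUnit (xy.1 ^ 2 - (Δ : ZMod (p ^ ℓ)) * xy.2 ^ 2)} ≃
        Σ u : (ZMod (p ^ ℓ))ˣ, {xy : ZMod (p ^ ℓ) × ZMod (p ^ ℓ) //
          xy.1 ^ 2 - (Δ : ZMod (p ^ ℓ)) * xy.2 ^ 2 = u} :=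
      { toFun := fun z => ⟨z.2.unit, z.1, by simp⟩
        invFun := fun z => ⟨z.2.1, by rw [z.2.2]; exact z.1.isUnit⟩
        left_inv := fun z => rfl
        right_inv := by
          rintro ⟨u, z, hz⟩
          exact Sigma.subtype_ext (Units.ext hz) rfl }
    rw [Nat.card_congr e, Nat.card_sigma, Finset.sum_congr rfl (fun u _ => key u), Finset.sum_const,
      Finset.card_univ, ZMod.card_units_eq_totient, Nat.totient_prime_pow hp hℓ, smul_eq_mul]
  have hN1 : Nat.card {x : ZMod (p ^ ℓ) // ¬ IsUnit x} = p ^ (ℓ - 1) := by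
    have h1 : Nat.card {x : ZMod (p ^ ℓ) // IsUnit x} = p ^ (ℓ - 1) * (p - 1) := by
      rw [← Nat.totient_prime_pow hp hℓ, ← ZMod.card_units_eq_totient, ← Nat.card_eq_fintype_card]
      exact Nat.card_congr ⟨fun x => x.2.unit, fun u => ⟨u, u.isUnit⟩, fun x => rfl,
        fun u => Units.ext rfl⟩
    have h2 := Nat.card_congr (Equiv.sumCompl (fun x : ZMod (p ^ ℓ) => IsUnit x))
    rw [Nat.card_sum, h1, Nat.card_zmod] at h2
    generalize Nat.card {x : ZMod (p ^ ℓ) // ¬ IsUnit x} = m at h2 ⊢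
    obtain ⟨k, rfl⟩ : ∃ k, ℓ = k + 1 := ⟨ℓ - 1, by omega⟩
    obtain ⟨q, rfl⟩ : ∃ q, p = q + 1 := ⟨p - 1, by have := hp.pos; omega⟩
    simp only [Nat.add_sub_cancel] at h2 ⊢
    rw [pow_succ] at h2
    linarith
  have hN : Nat.card {xy : ZMod (p ^ ℓ) × ZMod (p ^ ℓ) //
      ¬ IsUnit (xy.1 ^ 2 - (Δ : ZMod (p ^ ℓ)) * xy.2 ^ 2)} = p ^ (ℓ - 1) * p ^ (ℓ - 1) := by
    rw [← hN1, ← Nat.card_prod]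
    refine Nat.card_congr ((Equiv.subtypeEquivRight ?_).trans
      (Equiv.subtypeProdEquivProd (p := fun x : ZMod (p ^ ℓ) => ¬ IsUnit x)
        (q := fun x : ZMod (p ^ ℓ) => ¬ IsUnit x)))
    rintro ⟨x, y⟩
    simp only [aux_unit p hp ℓ hℓ, not_not, map_sub, map_mul, map_pow, map_intCast]
    exact aux_norm p hp _ hns _ _
  have h2 := Nat.card_congr (Equiv.sumCompl (fun xy : ZMod (p ^ ℓ) × ZMod (p ^ ℓ) =>
    IsUnit (xy.1 ^ 2 - (Δ : ZMod (p ^ ℓ)) * xy.2 ^ 2)))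
  rw [Nat.card_sum, hU, hN, Nat.card_prod, Nat.card_zmod] at h2
  clear_value c
  obtain ⟨k, rfl⟩ : ∃ k, ℓ = k + 1 := ⟨ℓ - 1, by omega⟩
  obtain ⟨q, rfl⟩ : ∃ q, p = q + 1 := ⟨p - 1, by have := hp.pos; omega⟩
  simp only [Nat.add_sub_cancel] at h2 ⊢
  have hq : 0 < q := by have := hp.two_le; omega
  have hP : 0 < (q + 1) ^ k := by positivity
  rw [pow_succ] at h2 ⊢
  refine Nat.eq_of_mul_eq_mul_left (Nat.mul_pos hP hq) ?_
  nlinarith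
end

section
/- Let p be an odd prime and Δ an integer not divisible by p whose image in ℤ/pℤ is not a square. Then for every ℓ ≥ 1 and every unit η of ℤ/p^ℓℤ there exist a, b ∈ ℤ/p^ℓℤ with a² − Δ̄·b² = η. -/
open Polynomial in
theorem base_case (p : ℕ) [Fact p.Prime] (hp2 : p ≠ 2) (d n : ZMod p) (hd : d ≠ 0) :
    ∃ a b : ZMod p, a ^ 2 - d * b ^ 2 = n := by
  have hg : degree (C (-d) * X ^ 2 + C 0 * X + C (-n) : (ZMod p)[X]) = 2 :=
    degree_quadratic (neg_ne_zero.mpr hd)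
  have hc : Fintype.card (ZMod p) % 2 = 1 := by
    rw [ZMod.card]
    exact ((Fact.out : p.Prime).eq_two_or_odd).resolve_left hp2
  obtain ⟨a, b, h⟩ := FiniteField.exists_root_sum_quadratic
    (f := (X ^ 2 : (ZMod p)[X])) (degree_X_pow 2) hg hc
  refine ⟨a, b, ?_⟩
  simp at h
  linear_combination h

theorem lift_int (p : ℕ) (hp : p.Prime) (hp2 : p ≠ 2) (Δ : ℤ) (hΔ : ¬ (p : ℤ) ∣ Δ)
    (n : ℤ) (hn : ¬ (p : ℤ) ∣ n) (k : ℕ) :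
    ∃ a b : ℤ, (p : ℤ) ^ (k + 1) ∣ a ^ 2 - Δ * b ^ 2 - n := by
  have hpi : Prime (p : ℤ) := Nat.prime_iff_prime_int.mp hp
  have h2 : ¬ (p : ℤ) ∣ 2 := by
    intro h
    have h' : p ∣ 2 := by exact_mod_cast h
    exact hp2 ((Nat.prime_dvd_prime_iff_eq hp Nat.prime_two).mp h')
  induction k with
  | zero =>
    haveI : Fact p.Prime := ⟨hp⟩
    obtain ⟨a, b, h⟩ := base_case p hp2 (Δ : ZMod p) (n : ZMod p)
      (by rwa [Ne, ZMod.intCast_zmod_eq_zero_iff_dvd])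
    obtain ⟨a, rfl⟩ := ZMod.intCast_surjective a
    obtain ⟨b, rfl⟩ := ZMod.intCast_surjective b
    refine ⟨a, b, ?_⟩
    rw [zero_add, pow_one, ← ZMod.intCast_zmod_eq_zero_iff_dvd]
    push_cast
    rw [h, sub_self]
  | succ k ih =>
    obtain ⟨a, b, c, hc⟩ := ih
    have key : ∃ s t u : ℤ, c + 2 * a * s - 2 * Δ * b * t = p * u := by
      by_cases ha : (p : ℤ) ∣ 2 * a
      · have hb : ¬ (p : ℤ) ∣ 2 * Δ * b := by
          intro hb
          have ha' := (hpi.dvd_or_dvd ha).resolve_left h2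
          have hb' : (p : ℤ) ∣ b := by
            rcases hpi.dvd_or_dvd hb with h | h
            · exact absurd ((hpi.dvd_or_dvd h).resolve_left h2) hΔ
            · exact h
          apply hn
          obtain ⟨x, rfl⟩ := ha'
          obtain ⟨y, rfl⟩ := hb'
          exact ⟨p * x ^ 2 - Δ * p * y ^ 2 - p ^ k * c, by linear_combination -hc⟩
        obtain ⟨u, v, h⟩ := (hpi.irreducible.coprime_iff_not_dvd).mpr hb
        exact ⟨0, c * v, c * u, by linear_combination -c * h⟩
      · obtain ⟨u, v, h⟩ := (hpi.irreducible.coprime_iff_not_dvd).mpr ha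
        exact ⟨-c * v, 0, c * u, by linear_combination -c * h⟩
    obtain ⟨s, t, u, h⟩ := key
    refine ⟨a + p ^ (k + 1) * s, b + p ^ (k + 1) * t, u + p ^ k * (s ^ 2 - Δ * t ^ 2), ?_⟩
    linear_combination hc + (p : ℤ) ^ (k + 1) * h

theorem stmt_8 (p : ℕ) (hp : p.Prime) (hp2 : p ≠ 2) (Δ : ℤ) (hΔ : ¬ (p : ℤ) ∣ Δ)
    (hns : ¬ IsSquare (Δ : ZMod p)) (ℓ : ℕ) (hℓ : 1 ≤ ℓ) (η : (ZMod (p ^ ℓ))ˣ) :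
    ∃ a b : ZMod (p ^ ℓ), a ^ 2 - (Δ : ZMod (p ^ ℓ)) * b ^ 2 = (η : ZMod (p ^ ℓ)) := by
  obtain ⟨k, rfl⟩ : ∃ k, ℓ = k + 1 := ⟨ℓ - 1, by omega⟩
  obtain ⟨n, hn⟩ := ZMod.intCast_surjective (η : ZMod (p ^ (k + 1)))
  obtain ⟨m, hm⟩ := ZMod.intCast_surjective ((η⁻¹ : (ZMod (p ^ (k + 1)))ˣ) : ZMod (p ^ (k + 1)))
  have hnm : (((n * m - 1 : ℤ)) : ZMod (p ^ (k + 1))) = 0 := by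
    push_cast
    rw [hn, hm, Units.mul_inv, sub_self]
  rw [ZMod.intCast_zmod_eq_zero_iff_dvd] at hnm
  have hpn : ¬ (p : ℤ) ∣ n := by
    intro h
    have h1 : (p : ℤ) ∣ n * m - 1 := (by push_cast; exact dvd_pow_self _ (by omega) :
      (p : ℤ) ∣ ((p ^ (k + 1) : ℕ) : ℤ)).trans hnm
    have h3 : (p : ℤ) ∣ 1 := by
      have := dvd_sub (h.mul_right m) h1
      simpa using this
    exact (Nat.prime_iff_prime_int.mp hp).not_dvd_one h3
  obtain ⟨a, b, h⟩ := lift_int p hp hp2 Δ hΔ n hpn k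
  refine ⟨a, b, ?_⟩
  have h' : ((a ^ 2 - Δ * b ^ 2 - n : ℤ) : ZMod (p ^ (k + 1))) = 0 := by
    rw [ZMod.intCast_zmod_eq_zero_iff_dvd]
    exact_mod_cast h
  push_cast at h'
  rw [← hn]
  exact sub_eq_zero.mp h'
end

section
/- Let p be a prime, u an integer not divisible by p, and N, ℓ natural numbers with N < ℓ. Then the number of pairs (x, y) ∈ (ℤ/p^ℓℤ)² with x·y equal to the image of p^N·u in ℤ/p^ℓℤ is exactly (N+1)·(p^ℓ − p^{ℓ−1}). -/
theorem aux_fiber (n : ℕ) [NeZero n] (x c y0 : ZMod n) (h : x * y0 = c) :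
    Nat.card {y : ZMod n // x * y = c} = n.gcd x.val := by
  have h1 := IsAddCyclic.card_nsmulAddMonoidHom_ker (G := ZMod n) x.val
  rw [Nat.card_zmod] at h1
  rw [← h1]
  refine Nat.card_congr ?_
  refine Equiv.trans (Equiv.subtypeEquivRight ?_)
    ((nsmulAddMonoidHom (α := ZMod n) x.val).fiberEquivKer y0)
  intro y
  simp [nsmul_eq_mul, ← h]

theorem aux_solv (p : ℕ) (hp : p.Prime) (u : ℤ) (hu : ¬ (p : ℤ) ∣ u)
    (N ℓ : ℕ) (hNℓ : N < ℓ) (x : ZMod (p ^ ℓ)) (k : ℕ) (hk : (p ^ ℓ).gcd x.val = p ^ k) :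
    (∃ y, x * y = ((p ^ N * u : ℤ) : ZMod (p ^ ℓ))) ↔ k ≤ N := by
  haveI : NeZero (p ^ ℓ) := ⟨pow_ne_zero _ hp.ne_zero⟩
  constructor
  · rintro ⟨y, hy⟩
    by_contra hlt
    push Not at hlt
    have h1 : (((x.val : ℤ) * y.val : ℤ) : ZMod (p ^ ℓ)) = ((p ^ N * u : ℤ) : ZMod (p ^ ℓ)) := by
      rw [← hy]; simp
    rw [ZMod.intCast_eq_intCast_iff_dvd_sub] at h1
    have h2 : ((p : ℤ) ^ (N+1)) ∣ ((p ^ ℓ : ℕ) : ℤ) := by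
      push_cast; exact pow_dvd_pow _ hNℓ
    have h3 : ((p : ℤ) ^ (N+1)) ∣ (x.val : ℤ) := by
      have h4 : p ^ (N+1) ∣ x.val :=
        (pow_dvd_pow p hlt).trans (hk ▸ Nat.gcd_dvd_right _ _)
      exact_mod_cast h4
    have h5 : ((p : ℤ) ^ (N+1)) ∣ (p : ℤ) ^ N * u := by
      have := dvd_add (h2.trans h1) (h3.mul_right (y.val : ℤ))
      simpa using this
    rw [pow_succ] at h5
    exact hu (Int.dvd_of_mul_dvd_mul_left (pow_ne_zero _ (by exact_mod_cast hp.ne_zero)) h5)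
  · intro hkN
    have hb := Nat.gcd_eq_gcd_ab (p ^ ℓ) x.val
    rw [hk] at hb
    have hb' := congrArg (Int.cast : ℤ → ZMod (p ^ ℓ)) hb
    have h0 : ((p : ZMod (p ^ ℓ)) ^ ℓ) = 0 := by
      rw [← Nat.cast_pow]; exact ZMod.natCast_self _
    push_cast at hb'
    rw [h0, zero_mul, zero_add, ZMod.natCast_zmod_val] at hb'
    refine ⟨(((p ^ ℓ).gcdB x.val : ℤ) : ZMod (p ^ ℓ)) * (p ^ (N - k) * u), ?_⟩
    rw [← mul_assoc, ← hb', ← mul_assoc, ← pow_add]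
    push_cast
    congr 3
    omega

theorem stmt_9 (p : ℕ) (hp : p.Prime) (u : ℤ) (hu : ¬ (p : ℤ) ∣ u)
    (N ℓ : ℕ) (hNℓ : N < ℓ) :
    Nat.card {xy : ZMod (p ^ ℓ) × ZMod (p ^ ℓ) //
        xy.1 * xy.2 = ((p ^ N * u : ℤ) : ZMod (p ^ ℓ))}
      = (N + 1) * (p ^ ℓ - p ^ (ℓ - 1)) := by
  haveI : NeZero (p ^ ℓ) := ⟨pow_ne_zero _ hp.ne_zero⟩
  generalize hc : ((p ^ N * u : ℤ) : ZMod (p ^ ℓ)) = c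
  have e : {xy : ZMod (p ^ ℓ) × ZMod (p ^ ℓ) // xy.1 * xy.2 = c} ≃
      (Σ x : ZMod (p ^ ℓ), {y : ZMod (p ^ ℓ) // x * y = c}) :=
    { toFun := fun a => ⟨a.1.1, a.1.2, a.2⟩
      invFun := fun b => ⟨(b.1, b.2.1), b.2.2⟩
      left_inv := fun _ => rfl
      right_inv := fun _ => rfl }
  rw [Nat.card_congr e, Nat.card_sigma]
  have hf : ∀ x : ZMod (p ^ ℓ), Nat.card {y : ZMod (p ^ ℓ) // x * y = c} =
      ∑ k ∈ Finset.range (N + 1), if (p ^ ℓ).gcd x.val = p ^ k then p ^ k else 0 := by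
    intro x
    obtain ⟨k, -, hk⟩ := (Nat.dvd_prime_pow hp).1 (Nat.gcd_dvd_left (p ^ ℓ) x.val)
    have hs := aux_solv p hp u hu N ℓ hNℓ x k hk
    rw [hc] at hs
    have hinj : ∀ j, (p ^ k = p ^ j) ↔ k = j := fun j =>
      (Nat.pow_right_injective hp.two_le).eq_iff
    simp only [hk, hinj, Finset.sum_ite_eq, Finset.mem_range, Nat.lt_succ_iff]
    split_ifs with hkN
    · obtain ⟨y, hy⟩ := hs.2 hkN
      rw [aux_fiber _ x c y hy, hk]
    · have : IsEmpty {y : ZMod (p ^ ℓ) // x * y = c} := ⟨fun y => hkN (hs.1 ⟨y.1, y.2⟩)⟩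
      simp
  rw [Finset.sum_congr rfl (fun x _ => hf x), Finset.sum_comm]
  have hk : ∀ k ∈ Finset.range (N + 1),
      (∑ x : ZMod (p ^ ℓ), if (p ^ ℓ).gcd x.val = p ^ k then p ^ k else 0) =
        p ^ ℓ - p ^ (ℓ - 1) := by
    intro k hk
    have hk' : k < ℓ := by have := Finset.mem_range.1 hk; omega
    have h1 : (∑ x : ZMod (p ^ ℓ), if (p ^ ℓ).gcd x.val = p ^ k then p ^ k else 0) =
        ∑ x ∈ Finset.range (p ^ ℓ), if (p ^ ℓ).gcd x = p ^ k then p ^ k else 0 := by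
      refine Finset.sum_bij (fun x _ => x.val) ?_ ?_ ?_ ?_
      · intro x _; exact Finset.mem_range.2 x.val_lt
      · intro x _ y _ h; exact ZMod.val_injective _ h
      · intro b hb
        exact ⟨(b : ZMod (p ^ ℓ)), Finset.mem_univ _,
          ZMod.val_cast_of_lt (Finset.mem_range.1 hb)⟩
      · intro x _; rfl
    rw [h1, ← Finset.sum_filter, Finset.sum_const,
      ← Nat.totient_div_of_dvd (pow_dvd_pow p hk'.le), Nat.pow_div hk'.le hp.pos,
      Nat.totient_prime_pow hp (by omega), smul_eq_mul]
    obtain ⟨m, rfl⟩ : ∃ m, ℓ = k + m + 1 := ⟨ℓ - k - 1, by omega⟩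
    have e1 : k + m + 1 - k - 1 = m := by omega
    rw [e1, Nat.add_sub_cancel, pow_succ p (k + m), pow_add, ← Nat.mul_sub_one]
    ring
  rw [Finset.sum_congr rfl hk]
  simp
end

section
/- Let p be a prime and ℓ a natural number. Then the number of pairs (x, y) ∈ (ℤ/p^ℓℤ)² with x·y = 0 is exactly p^ℓ + ℓ·(p^ℓ − p^{ℓ−1}). -/
theorem aux_ker (n : ℕ) [NeZero n] (k : ℕ) :
    Nat.card {y : ZMod n // (k : ZMod n) * y = 0} = n.gcd k := by
  have h := IsAddCyclic.card_nsmulAddMonoidHom_ker (G := ZMod n) k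
  rw [Nat.card_zmod] at h
  rw [← h]
  apply Nat.card_congr
  refine Equiv.subtypeEquivRight fun y => ?_
  simp [AddMonoidHom.mem_ker]

theorem aux_sum (n : ℕ) [NeZero n] :
    Nat.card {xy : ZMod n × ZMod n // xy.1 * xy.2 = 0} = ∑ k ∈ Finset.range n, n.gcd k := by
  have e : {xy : ZMod n × ZMod n // xy.1 * xy.2 = 0} ≃ Σ x : ZMod n, {y : ZMod n // x * y = 0} :=
    Equiv.subtypeProdEquivSigmaSubtype (fun x y : ZMod n => x * y = 0)
  rw [Nat.card_congr e, Nat.card_sigma]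
  refine Finset.sum_bij (fun x _ => x.val) ?_ ?_ ?_ ?_
  · intro x _
    simpa using ZMod.val_lt x
  · intro x _ y _ h
    exact ZMod.val_injective n h
  · intro k hk
    exact ⟨k, Finset.mem_univ _, ZMod.val_cast_of_lt (Finset.mem_range.1 hk)⟩
  · intro x _
    rw [← aux_ker]
    simp

theorem aux_pillai (n : ℕ) (hn : n ≠ 0) :
    ∑ k ∈ Finset.range n, n.gcd k = ∑ d ∈ n.divisors, d * Nat.totient (n / d) := by
  rw [← Finset.sum_fiberwise_of_maps_to (s := Finset.range n) (t := n.divisors) (g := fun k => n.gcd k)]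
  · refine Finset.sum_congr rfl fun d hd => ?_
    rw [Nat.totient_div_of_dvd (Nat.dvd_of_mem_divisors hd),
      Finset.sum_congr rfl (g := fun _ => d) (fun k hk => (Finset.mem_filter.1 hk).2)]
    simp [mul_comm]
  · intro k _
    simp [hn, Nat.gcd_dvd_left]

theorem stmt_10 (p : ℕ) (hp : p.Prime) (ℓ : ℕ) :
    Nat.card {xy : ZMod (p ^ ℓ) × ZMod (p ^ ℓ) // xy.1 * xy.2 = 0}
      = p ^ ℓ + ℓ * (p ^ ℓ - p ^ (ℓ - 1)) := by
  have hn : p ^ ℓ ≠ 0 := pow_ne_zero _ hp.ne_zero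
  haveI : NeZero (p ^ ℓ) := ⟨hn⟩
  rw [aux_sum, aux_pillai _ hn, Nat.sum_divisors_prime_pow hp, Finset.sum_range_succ,
    Nat.div_self (Nat.pos_of_ne_zero hn), Nat.totient_one, mul_one, add_comm]
  congr 1
  rw [Finset.sum_congr rfl (g := fun _ => p ^ ℓ - p ^ (ℓ - 1))]
  · simp
  · intro i hi
    obtain ⟨m, rfl⟩ := Nat.exists_eq_add_of_lt (Finset.mem_range.1 hi)
    rw [Nat.pow_div (by omega) hp.pos, show i + m + 1 - i = m + 1 by omega,
      Nat.totient_prime_pow_succ hp, Nat.add_sub_cancel, ← mul_assoc, ← pow_add,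
      Nat.mul_sub, mul_one, ← pow_succ]
end

section
/- Let p be an odd prime, Δ an integer not divisible by p, and set ε = 1 if the image of Δ in ℤ/pℤ is a square and ε = −1 otherwise. For natural numbers T and ℓ, let N_{T,ℓ} be the number of pairs (x, y) ∈ (ℤ/p^ℓℤ)² with x² − Δ̄·y² equal to the image of p^{2T} in ℤ/p^ℓℤ. Then for all real a, z with |a| < 1 and |z| < 1, setting w = z/p, the double series indexed by (T,ℓ) ∈ ℕ×ℕ with terms a^T · z^ℓ · N_{T,ℓ}/p^{2ℓ} converges with sum (1 − ε·w/p)(1 − a²w²) / ((1 − w)(1 − a)(1 − a·w²)(1 − ε·a·w)). -/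
namespace PiTwo
open Classical Finset

noncomputable def cnt (n : ℕ) (P : ℕ → ℕ → Prop) : ℕ :=
  ∑ x ∈ range n, ∑ y ∈ range n, if P x y then 1 else 0

def sol (Δ c : ℤ) (n : ℕ) (x y : ℕ) : Prop := (n : ℤ) ∣ (x : ℤ) ^ 2 - Δ * (y : ℤ) ^ 2 - c

def prim (p x y : ℕ) : Prop := ¬ (p ∣ x ∧ p ∣ y)

theorem sum_range_mul (m k : ℕ) (f : ℕ → ℕ) :
    ∑ x ∈ range (m * k), f x = ∑ x ∈ range m, ∑ s ∈ range k, f (x + m * s) := by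
  rw [sum_comm]
  induction k with
  | zero => simp
  | succ k ih =>
    rw [Nat.mul_succ, sum_range_add, ih, sum_range_succ]
    congr 1
    exact sum_congr rfl fun x _ => by rw [add_comm]

theorem cnt_mul (m k : ℕ) (P : ℕ → ℕ → Prop) :
    cnt (m * k) P = ∑ x ∈ range m, ∑ y ∈ range m,
      cnt k (fun s t => P (x + m * s) (y + m * t)) := by
  unfold cnt
  simp only [sum_range_mul]
  refine sum_congr rfl fun x _ => ?_
  rw [sum_comm]

theorem cnt_split (n : ℕ) (P Q : ℕ → ℕ → Prop) :
    cnt n P = cnt n (fun x y => P x y ∧ Q x y) + cnt n (fun x y => P x y ∧ ¬ Q x y) := by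
  unfold cnt
  simp only [← sum_add_distrib]
  refine sum_congr rfl fun x _ => sum_congr rfl fun y _ => ?_
  by_cases h : P x y <;> by_cases h' : Q x y <;> simp [h, h']

theorem cnt_congr (n : ℕ) (P Q : ℕ → ℕ → Prop) (h : ∀ x < n, ∀ y < n, (P x y ↔ Q x y)) :
    cnt n P = cnt n Q := by
  unfold cnt
  refine sum_congr rfl fun x hx => sum_congr rfl fun y hy => ?_
  simp [h x (mem_range.1 hx) y (mem_range.1 hy)]

theorem cnt_const (n : ℕ) (q : Prop) : cnt n (fun _ _ => q) = if q then n ^ 2 else 0 := by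
  unfold cnt
  by_cases h : q <;> simp [h, sq]

theorem cnt_le (n : ℕ) (P : ℕ → ℕ → Prop) : cnt n P ≤ n ^ 2 := by
  have := cnt_split n (fun _ _ => True) P
  rw [cnt_const] at this
  simp only [true_and, if_true] at this
  rw [this]
  exact Nat.le_add_right _ _

theorem sum_zmod (n : ℕ) [NeZero n] {M : Type*} [AddCommMonoid M] (g : ZMod n → M) :
    ∑ z : ZMod n, g z = ∑ i ∈ range n, g (i : ZMod n) := by
  obtain ⟨k, rfl⟩ : ∃ k, n = k + 1 := ⟨n - 1, by have := NeZero.pos n; omega⟩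
  rw [Finset.sum_range]
  refine sum_congr rfl fun z _ => ?_
  congr 1
  exact (ZMod.natCast_zmod_val z).symm

theorem cnt_zmod (n : ℕ) [NeZero n] (P : ℕ → ℕ → Prop) (Q : ZMod n → ZMod n → Prop)
    (h : ∀ x y : ℕ, P x y ↔ Q x y) :
    cnt n P = ∑ x : ZMod n, ∑ y : ZMod n, if Q x y then 1 else 0 := by
  unfold cnt
  simp only [sum_zmod, h]

theorem sol_iff (Δ c : ℤ) (n x y : ℕ) :
    sol Δ c n x y ↔ (x : ZMod n) ^ 2 - (Δ : ZMod n) * (y : ZMod n) ^ 2 = (c : ZMod n) := by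
  unfold sol
  rw [← ZMod.intCast_zmod_eq_zero_iff_dvd, ← sub_eq_zero (b := (c : ZMod n))]
  push_cast
  rfl

theorem card_eq (Δ c : ℤ) (n : ℕ) [NeZero n] :
    Nat.card {xy : ZMod n × ZMod n // xy.1 ^ 2 - (Δ : ZMod n) * xy.2 ^ 2 = (c : ZMod n)}
      = cnt n (sol Δ c n) := by
  rw [cnt_zmod n _ (fun x y => x ^ 2 - (Δ : ZMod n) * y ^ 2 = (c : ZMod n)) (sol_iff Δ c n),
    Nat.card_eq_fintype_card, Fintype.card_subtype, Finset.card_filter, Fintype.sum_prod_type]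
  refine sum_congr rfl fun x _ => sum_congr rfl fun y _ => ?_
  congr

theorem lin_count (p : ℕ) [Fact p.Prime] (m α β : ZMod p) (h : ¬ (α = 0 ∧ β = 0)) :
    (∑ s : ZMod p, ∑ t : ZMod p, if m + α * s + β * t = 0 then 1 else 0) = p := by
  have key : ∀ m α β : ZMod p, β ≠ 0 →
      (∑ s : ZMod p, ∑ t : ZMod p, if m + α * s + β * t = 0 then 1 else 0) = p := by
    intro m α β hβ
    have : ∀ s t : ZMod p, m + α * s + β * t = 0 ↔ t = -(m + α * s) / β := by
      intro s t
      rw [eq_div_iff hβ]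
      constructor
      · intro h; linear_combination h
      · intro h; linear_combination h
    simp [this, ZMod.card]
  by_cases hβ : β = 0
  · have hα : α ≠ 0 := fun h' => h ⟨h', hβ⟩
    rw [sum_comm]
    refine Eq.trans ?_ (key m β α hα)
    refine sum_congr rfl fun s _ => sum_congr rfl fun t _ => ?_
    simp only [add_right_comm]
  · exact key m α β hβ

theorem lift_step (p : ℕ) (hp : p.Prime) (hp2 : p ≠ 2) (Δ : ℤ) (hΔ : ¬ (p : ℤ) ∣ Δ) (c : ℤ)
    (l : ℕ) (hl : 1 ≤ l) :
    cnt (p ^ (l + 1)) (fun x y => sol Δ c (p ^ (l + 1)) x y ∧ prim p x y)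
      = p * cnt (p ^ l) (fun x y => sol Δ c (p ^ l) x y ∧ prim p x y) := by
  have := Fact.mk hp
  rw [pow_succ, cnt_mul]
  conv_rhs => unfold cnt
  rw [mul_sum]
  refine sum_congr rfl fun x _ => ?_
  rw [mul_sum]
  refine sum_congr rfl fun y _ => ?_
  have hpl : p ∣ p ^ l := dvd_pow_self p (by omega)
  have hpr : ∀ s t, prim p (x + p ^ l * s) (y + p ^ l * t) ↔ prim p x y := by
    intro s t
    unfold prim
    rw [Nat.dvd_add_left (hpl.mul_right s), Nat.dvd_add_left (hpl.mul_right t)]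
  simp only [hpr]
  have hexp : ∀ s t : ℕ, ((x + p ^ l * s : ℕ) : ℤ) ^ 2 - Δ * ((y + p ^ l * t : ℕ) : ℤ) ^ 2 - c
      = ((x : ℤ) ^ 2 - Δ * (y : ℤ) ^ 2 - c) + (p : ℤ) ^ l * (2 * x * s + (-2 * Δ * y) * t)
        + (p : ℤ) ^ l * (p : ℤ) ^ l * (s ^ 2 - Δ * t ^ 2) := by
    intro s t; push_cast; ring
  by_cases hpri : prim p x y
  swap
  · simp [hpri, cnt_const]
  by_cases hs : sol Δ c (p ^ l) x y
  · obtain ⟨m, hm⟩ := hs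
    have hs : sol Δ c (p ^ l) x y := ⟨m, hm⟩
    simp only [hpri, hs, and_self, if_true, mul_one, and_true]
    rw [cnt_zmod p _ (fun s t => (m : ZMod p) + ((2 * x : ℤ) : ZMod p) * s
      + ((-2 * Δ * y : ℤ) : ZMod p) * t = 0)]
    · refine Eq.trans ?_ (lin_count p (m : ZMod p) ((2 * x : ℤ) : ZMod p)
          ((-2 * Δ * y : ℤ) : ZMod p) ?_)
      · refine sum_congr rfl fun x _ => sum_congr rfl fun y _ => ?_
        congr
      rintro ⟨h1, h2⟩
      rw [ZMod.intCast_zmod_eq_zero_iff_dvd] at h1 h2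
      have hpp : Prime (p : ℤ) := Nat.prime_iff_prime_int.1 hp
      have hn2 : ¬ (p : ℤ) ∣ 2 := by
        intro h
        have h : p ∣ 2 := by exact_mod_cast h
        exact hp2 ((Nat.prime_dvd_prime_iff_eq hp Nat.prime_two).1 h)
      apply hpri
      constructor
      · rcases hpp.dvd_or_dvd h1 with h | h
        · exact absurd h hn2
        · exact_mod_cast h
      · rcases hpp.dvd_or_dvd h2 with h | h
        · rcases hpp.dvd_or_dvd h with h | h
          · exact absurd ((dvd_neg).1 h) hn2
          · exact absurd h hΔ
        · exact_mod_cast h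
    · intro s t
      have : (m : ZMod p) + ((2 * x : ℤ) : ZMod p) * (s : ZMod p)
          + ((-2 * Δ * y : ℤ) : ZMod p) * (t : ZMod p)
          = ((m + (2 * x * s + (-2 * Δ * y) * t) : ℤ) : ZMod p) := by push_cast; ring
      rw [this, ZMod.intCast_zmod_eq_zero_iff_dvd]
      unfold sol
      rw [hexp, hm]
      have hp0 : (p : ℤ) ^ l ≠ 0 := pow_ne_zero _ (by exact_mod_cast hp.ne_zero)
      have e : ((p ^ l : ℕ) : ℤ) * m + (p : ℤ) ^ l * (2 * x * s + (-2 * Δ * y) * t)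
        + (p : ℤ) ^ l * (p : ℤ) ^ l * (s ^ 2 - Δ * t ^ 2)
        = (p : ℤ) ^ l * ((m + (2 * x * s + (-2 * Δ * y) * t))
          + (p : ℤ) ^ l * (s ^ 2 - Δ * t ^ 2)) := by push_cast; ring
      rw [e]
      push_cast
      rw [mul_dvd_mul_iff_left hp0]
      apply dvd_add_left
      exact (dvd_pow_self _ (by omega)).mul_right _
  · simp only [hs, false_and, if_false, mul_zero]
    rw [cnt_congr p _ (fun _ _ => False), cnt_const, if_neg id]
    intro s _ t _
    simp only [iff_false, not_and]
    intro h
    exfalso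
    apply hs
    unfold sol at h ⊢
    rw [hexp] at h
    have h' := (Dvd.intro _ (by push_cast; rfl : ((p ^ l : ℕ) : ℤ) * p = _)).trans h
    push_cast at h' ⊢
    rw [add_assoc, mul_assoc ((p : ℤ) ^ l) ((p : ℤ) ^ l), ← mul_add] at h'
    exact (dvd_add_left (Dvd.intro _ rfl)).1 h'

theorem lift_all (p : ℕ) (hp : p.Prime) (hp2 : p ≠ 2) (Δ : ℤ) (hΔ : ¬ (p : ℤ) ∣ Δ) (c : ℤ)
    (l : ℕ) :
    cnt (p ^ (l + 1)) (fun x y => sol Δ c (p ^ (l + 1)) x y ∧ prim p x y)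
      = p ^ l * cnt p (fun x y => sol Δ c p x y ∧ prim p x y) := by
  induction l with
  | zero => simp
  | succ l ih => rw [lift_step p hp hp2 Δ hΔ c (l + 1) (by omega), ih]; ring

/-- The non-primitive part. -/
theorem nonprim (p : ℕ) (hp : p.Prime) (P : ℕ → ℕ → Prop) (k : ℕ) :
    cnt (p * k) (fun x y => P x y ∧ ¬ prim p x y) = cnt k (fun s t => P (p * s) (p * t)) := by
  rw [cnt_mul, sum_eq_single_of_mem 0 (mem_range.2 hp.pos),
    sum_eq_single_of_mem 0 (mem_range.2 hp.pos)]
  · apply cnt_congr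
    intro s _ t _
    simp [prim]
  · intro y hy hy0
    rw [cnt_congr k _ (fun _ _ => False), cnt_const, if_neg id]
    intro s _ t _
    simp only [iff_false, not_and, prim, not_not]
    intro _ _ h
    rw [Nat.dvd_add_left (Dvd.intro _ rfl)] at h
    exact hy0 (Nat.eq_zero_of_dvd_of_lt h (mem_range.1 hy))
  · intro x hx hx0
    refine sum_eq_zero fun y hy => ?_
    rw [cnt_congr k _ (fun _ _ => False), cnt_const, if_neg id]
    intro s _ t _
    simp only [iff_false, not_and, prim, not_not]
    intro _ h
    rw [Nat.dvd_add_left (Dvd.intro _ rfl)] at h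
    exact absurd (Nat.eq_zero_of_dvd_of_lt h (mem_range.1 hx)) hx0

theorem nonprim_one (p : ℕ) (hp : p.Prime) (Δ : ℤ) (T : ℕ) :
    cnt p (fun x y => sol Δ ((p ^ (2 * (T + 1)) : ℕ) : ℤ) p x y ∧ ¬ prim p x y) = 1 := by
  have := nonprim p hp (sol Δ ((p ^ (2 * (T + 1)) : ℕ) : ℤ) p) 1
  rw [mul_one] at this
  rw [this, cnt_congr 1 _ (fun _ _ => True), cnt_const]
  · simp
  intro s hs t ht
  obtain rfl : s = 0 := by omega
  obtain rfl : t = 0 := by omega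
  simp only [sol, iff_true]
  push_cast
  simp

theorem nonprim_succ (p : ℕ) (hp : p.Prime) (Δ : ℤ) (T l : ℕ) :
    cnt (p ^ (l + 2)) (fun x y => sol Δ ((p ^ (2 * (T + 1)) : ℕ) : ℤ) (p ^ (l + 2)) x y
        ∧ ¬ prim p x y)
      = p ^ 2 * cnt (p ^ l) (sol Δ ((p ^ (2 * T) : ℕ) : ℤ) (p ^ l)) := by
  have hp0 : (p : ℤ) ^ 2 ≠ 0 := pow_ne_zero _ (by exact_mod_cast hp.ne_zero)
  have := nonprim p hp (sol Δ ((p ^ (2 * (T + 1)) : ℕ) : ℤ) (p ^ (l + 2))) (p ^ l * p)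
  rw [show p * (p ^ l * p) = p ^ (l + 2) by ring] at this
  rw [this, cnt_mul]
  conv_rhs => unfold cnt
  rw [mul_sum]
  refine sum_congr rfl fun x _ => ?_
  rw [mul_sum]
  refine sum_congr rfl fun y _ => ?_
  rw [cnt_congr p _ (fun _ _ => sol Δ ((p ^ (2 * T) : ℕ) : ℤ) (p ^ l) x y), cnt_const]
  · simp
  intro s _ t _
  unfold sol
  have e1 : ((p ^ (l + 2) : ℕ) : ℤ) = (p : ℤ) ^ 2 * (p : ℤ) ^ l := by push_cast; ring
  have e2 : ((p * (x + p ^ l * s) : ℕ) : ℤ) ^ 2 - Δ * ((p * (y + p ^ l * t) : ℕ) : ℤ) ^ 2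
      - ((p ^ (2 * (T + 1)) : ℕ) : ℤ)
      = (p : ℤ) ^ 2 * (((x : ℤ) ^ 2 - Δ * (y : ℤ) ^ 2 - ((p ^ (2 * T) : ℕ) : ℤ)) +
        (p : ℤ) ^ l * (2 * x * s + (p : ℤ) ^ l * s ^ 2
          - Δ * (2 * y * t + (p : ℤ) ^ l * t ^ 2))) := by
    push_cast; ring
  rw [e1, e2, mul_dvd_mul_iff_left hp0, dvd_add_left (Dvd.intro _ rfl)]
  push_cast
  rfl

theorem sqrt_count (p : ℕ) [Fact p.Prime] (hp2 : p ≠ 2) (u : ZMod p) :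
    (∑ x : ZMod p, if x ^ 2 = u then (1 : ℤ) else 0) = quadraticChar (ZMod p) u + 1 := by
  rw [← quadraticChar_card_sqrts (by rwa [ZMod.ringChar_zmod_n]) u, Finset.sum_boole]
  congr 2
  ext x
  simp

theorem conic (p : ℕ) [Fact p.Prime] (hp2 : p ≠ 2) (d : ZMod p) (hd : d ≠ 0) :
    (∑ x : ZMod p, ∑ y : ZMod p, if x ^ 2 - d * y ^ 2 = 1 then (1 : ℤ) else 0)
      = p - quadraticChar (ZMod p) d := by
  have hr : ringChar (ZMod p) ≠ 2 := by rwa [ZMod.ringChar_zmod_n]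
  set χ := quadraticChar (ZMod p) with hχ
  have hχ1 : χ ≠ 1 := quadraticChar_ne_one hr
  have h0 : ∑ u, χ u = 0 := quadraticChar_sum_zero hr
  have hJ : ∑ v, χ v * χ (1 - v) = - χ (-1) := by
    have := jacobiSum_nontrivial_inv hχ1
    rwa [(quadraticChar_isQuadratic (ZMod p)).inv] at this
  have h1 : ∑ u, χ (1 + d * u) = 0 := by
    rw [← h0]
    exact Fintype.sum_bijective (fun u => 1 + d * u)
      ⟨fun a b h => by simpa [hd] using h, fun b => ⟨(b - 1) / d, by field_simp; ring⟩⟩ _ _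
      (fun _ => rfl)
  have h2 : ∑ u, χ u * χ (1 + d * u) = - χ d := by
    have e : ∑ u, χ u * χ (1 + d * u) = ∑ v, χ (-d) * (χ v * χ (1 - v)) := by
      refine Fintype.sum_bijective (fun u => -d * u)
        ⟨fun a b h => by simpa [hd] using h, fun b => ⟨b / (-d), by field_simp⟩⟩ _ _ ?_
      intro u
      have : χ (-d) * χ (-d) = 1 := by
        rw [← sq]; exact quadraticChar_sq_one (neg_ne_zero.2 hd)
      rw [map_mul, ← mul_assoc, ← mul_assoc, this, one_mul]
      congr 2; ring
    rw [e, ← mul_sum, hJ, mul_neg, ← map_mul]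
    congr 2; ring
  calc _ = ∑ y : ZMod p, (χ (1 + d * y ^ 2) + 1) := by
        rw [sum_comm]
        refine sum_congr rfl fun y _ => ?_
        rw [hχ, ← sqrt_count p hp2]
        refine sum_congr rfl fun x _ => ?_
        simp only [sub_eq_iff_eq_add]
    _ = ∑ y : ZMod p, χ (1 + d * y ^ 2) + p := by
        rw [sum_add_distrib]; simp [ZMod.card]
    _ = ∑ y : ZMod p, ∑ u : ZMod p, (if y ^ 2 = u then (1 : ℤ) else 0) * χ (1 + d * u) + p := by
        simp
    _ = ∑ u : ZMod p, (χ u + 1) * χ (1 + d * u) + p := by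
        rw [sum_comm]
        simp only [← sum_mul, sqrt_count p hp2, ← hχ]
    _ = _ := by
        simp only [add_mul, one_mul, sum_add_distrib, h1, h2]; ring

theorem cone (p : ℕ) [Fact p.Prime] (hp2 : p ≠ 2) (d : ZMod p) (hd : d ≠ 0) :
    (∑ x : ZMod p, ∑ y : ZMod p, if x ^ 2 - d * y ^ 2 = 0 ∧ ¬ (x = 0 ∧ y = 0)
      then (1 : ℤ) else 0)
      = (p - 1) * (1 + quadraticChar (ZMod p) d) := by
  have hr : ringChar (ZMod p) ≠ 2 := by rwa [ZMod.ringChar_zmod_n]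
  set χ := quadraticChar (ZMod p) with hχ
  rw [sum_comm]
  have : ∀ y : ZMod p, (∑ x : ZMod p, if x ^ 2 - d * y ^ 2 = 0 ∧ ¬ (x = 0 ∧ y = 0)
      then (1 : ℤ) else 0) = (1 + χ d) - if y = 0 then (1 + χ d) else 0 := by
    intro y
    by_cases hy : y = 0
    · simp [hy]
    · have : χ d = χ (d * y ^ 2) := by
        rw [map_mul, map_pow, hχ, quadraticChar_sq_one hy, mul_one]
      simp only [hy, and_false, not_false_eq_true, and_true, if_false, sub_zero]
      rw [this, add_comm, hχ, ← sqrt_count p hp2]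
      simp only [sub_eq_zero]
  simp only [this, sum_sub_distrib]
  simp [ZMod.card]
  ring

theorem prim_iff (p x y : ℕ) : prim p x y ↔ ¬ ((x : ZMod p) = 0 ∧ (y : ZMod p) = 0) := by
  unfold prim
  rw [ZMod.natCast_eq_zero_iff, ZMod.natCast_eq_zero_iff]

theorem base_zero (p : ℕ) [Fact p.Prime] (hp2 : p ≠ 2) (Δ : ℤ) (hd : (Δ : ZMod p) ≠ 0) :
    (cnt p (fun x y => sol Δ 1 p x y ∧ prim p x y) : ℤ)
      = p - quadraticChar (ZMod p) (Δ : ZMod p) := by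
  rw [cnt_zmod p _ (fun x y => x ^ 2 - (Δ : ZMod p) * y ^ 2 = 1), ← conic p hp2 _ hd]
  · push_cast
    refine sum_congr rfl fun x _ => sum_congr rfl fun y _ => ?_
    congr
  · intro x y
    rw [sol_iff, prim_iff]
    push_cast
    constructor
    · exact fun h => h.1
    · intro h
      refine ⟨h, ?_⟩
      rintro ⟨h1, h2⟩
      rw [h1, h2] at h
      simp at h

theorem base_succ (p : ℕ) [Fact p.Prime] (hp2 : p ≠ 2) (Δ : ℤ) (hd : (Δ : ZMod p) ≠ 0) (T : ℕ) :
    (cnt p (fun x y => sol Δ ((p ^ (2 * (T + 1)) : ℕ) : ℤ) p x y ∧ prim p x y) : ℤ)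
      = (p - 1) * (1 + quadraticChar (ZMod p) (Δ : ZMod p)) := by
  rw [cnt_zmod p _ (fun x y => x ^ 2 - (Δ : ZMod p) * y ^ 2 = 0 ∧ ¬ (x = 0 ∧ y = 0)),
    ← cone p hp2 _ hd]
  · push_cast
    refine sum_congr rfl fun x _ => sum_congr rfl fun y _ => ?_
    congr
  · intro x y
    rw [sol_iff, prim_iff]
    push_cast
    rw [CharP.cast_eq_zero (ZMod p) p, zero_pow (by omega)]

/-- The counting function. -/
noncomputable def N (p : ℕ) (Δ : ℤ) (T l : ℕ) : ℕ :=
  cnt (p ^ l) (sol Δ ((p ^ (2 * T) : ℕ) : ℤ) (p ^ l))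

theorem N_zero (p : ℕ) (Δ : ℤ) (T : ℕ) : N p Δ T 0 = 1 := by
  simp [N, cnt, sol]

theorem N_zero_succ (p : ℕ) [Fact p.Prime] (hp : p.Prime) (hp2 : p ≠ 2) (Δ : ℤ)
    (hΔ : ¬ (p : ℤ) ∣ Δ) (l : ℕ) :
    (N p Δ 0 (l + 1) : ℤ) = p ^ l * (p - quadraticChar (ZMod p) (Δ : ZMod p)) := by
  have hd : (Δ : ZMod p) ≠ 0 := by rwa [Ne, ZMod.intCast_zmod_eq_zero_iff_dvd]
  unfold N
  rw [cnt_split _ _ (prim p)]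
  have h0 : cnt (p ^ (l + 1)) (fun x y => sol Δ ((p ^ (2 * 0) : ℕ) : ℤ) (p ^ (l + 1)) x y
      ∧ ¬ prim p x y) = 0 := by
    rw [cnt_congr _ _ (fun _ _ => False), cnt_const, if_neg id]
    intro x _ y _
    simp only [iff_false, not_and, prim, not_not]
    intro h
    by_contra hc
    rw [not_forall, ] at hc
    simp only [not_exists, not_not] at hc
    obtain ⟨⟨h1, h2⟩⟩ : Nonempty (p ∣ x ∧ p ∣ y) := by
      by_contra h'
      simp_all
    unfold sol at h
    have h3 : (p : ℤ) ∣ ((p ^ (l + 1) : ℕ) : ℤ) := by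
      push_cast; exact dvd_pow_self _ (by omega)
    have h4 := h3.trans h
    have hx : (p : ℤ) ∣ (x : ℤ) ^ 2 := (Int.natCast_dvd_natCast.2 h1).trans (dvd_pow_self _ two_ne_zero)
    have hy : (p : ℤ) ∣ Δ * (y : ℤ) ^ 2 :=
      ((Int.natCast_dvd_natCast.2 h2).trans (dvd_pow_self _ two_ne_zero)).mul_left _
    have h5 := (dvd_sub_right (hx.sub hy)).1 h4
    have h6 := Int.natCast_dvd_natCast.1 h5
    simp at h6
    exact hp.one_lt.ne' h6
  rw [h0, add_zero, lift_all p hp hp2 Δ hΔ]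
  push_cast
  rw [← base_zero p hp2 Δ hd]
  simp

theorem N_succ_one (p : ℕ) [Fact p.Prime] (hp : p.Prime) (hp2 : p ≠ 2) (Δ : ℤ)
    (hΔ : ¬ (p : ℤ) ∣ Δ) (T : ℕ) :
    (N p Δ (T + 1) 1 : ℤ) = (p - 1) * (1 + quadraticChar (ZMod p) (Δ : ZMod p)) + 1 := by
  have hd : (Δ : ZMod p) ≠ 0 := by rwa [Ne, ZMod.intCast_zmod_eq_zero_iff_dvd]
  unfold N
  rw [cnt_split _ _ (prim p), pow_one, nonprim_one p hp]
  push_cast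
  rw [← base_succ p hp2 Δ hd T]
  push_cast
  rfl

theorem N_succ_succ (p : ℕ) [Fact p.Prime] (hp : p.Prime) (hp2 : p ≠ 2) (Δ : ℤ)
    (hΔ : ¬ (p : ℤ) ∣ Δ) (T l : ℕ) :
    (N p Δ (T + 1) (l + 2) : ℤ)
      = p ^ (l + 1) * ((p - 1) * (1 + quadraticChar (ZMod p) (Δ : ZMod p)))
        + p ^ 2 * N p Δ T l := by
  have hd : (Δ : ZMod p) ≠ 0 := by rwa [Ne, ZMod.intCast_zmod_eq_zero_iff_dvd]
  unfold N
  rw [cnt_split _ _ (prim p), nonprim_succ p hp, lift_all p hp hp2 Δ hΔ]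
  push_cast
  rw [← base_succ p hp2 Δ hd T]
  push_cast
  rfl

end PiTwo

open PiTwo in
open Classical in
theorem stmt_12 (p : ℕ) (hp : p.Prime) (hp2 : p ≠ 2) (Δ : ℤ) (hΔ : ¬ (p : ℤ) ∣ Δ)
    (ε : ℝ) (hε : ε = if IsSquare (Δ : ZMod p) then 1 else -1)
    (a z : ℝ) (ha : |a| < 1) (hz : |z| < 1) (w : ℝ) (hw : w = z / p) :
    HasSum
      (fun Tℓ : ℕ × ℕ => a ^ Tℓ.1 * z ^ Tℓ.2 *
        ((Nat.card {xy : ZMod (p ^ Tℓ.2) × ZMod (p ^ Tℓ.2) //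
            xy.1 ^ 2 - (Δ : ZMod (p ^ Tℓ.2)) * xy.2 ^ 2
              = ((p ^ (2 * Tℓ.1) : ℕ) : ZMod (p ^ Tℓ.2))} : ℝ)
          / p ^ (2 * Tℓ.2)))
      ((1 - ε * w / p) * (1 - a ^ 2 * w ^ 2)
        / ((1 - w) * (1 - a) * (1 - a * w ^ 2) * (1 - ε * a * w))) := by
  have := Fact.mk hp
  have hd : (Δ : ZMod p) ≠ 0 := by rwa [Ne, ZMod.intCast_zmod_eq_zero_iff_dvd]
  have hχ : ((quadraticChar (ZMod p) (Δ : ZMod p) : ℤ) : ℝ) = ε := by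
    rw [hε]
    split_ifs with h
    · rw [(quadraticChar_one_iff_isSquare hd).2 h]; simp
    · rw [quadraticChar_neg_one_iff_not_isSquare.2 h]; simp
  have hN : ∀ T l : ℕ, Nat.card {xy : ZMod (p ^ l) × ZMod (p ^ l) //
            xy.1 ^ 2 - (Δ : ZMod (p ^ l)) * xy.2 ^ 2
              = ((p ^ (2 * T) : ℕ) : ZMod (p ^ l))} = N p Δ T l := by
    intro T l
    have : NeZero (p ^ l) := ⟨pow_ne_zero _ hp.ne_zero⟩
    have := card_eq Δ ((p ^ (2 * T) : ℕ) : ℤ) (p ^ l)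
    rw [Int.cast_natCast] at this
    exact this
  simp only [hN]
  have hε2 : ε = 1 ∨ ε = -1 := by rw [hε]; split_ifs <;> simp
  clear hN
  have hp1 : (1 : ℝ) < p := by exact_mod_cast hp.one_lt
  have hp0 : (p : ℝ) ≠ 0 := by positivity
  have hwz : |w| ≤ |z| := by
    rw [hw, abs_div, Nat.abs_cast]
    exact div_le_self (abs_nonneg _) hp1.le
  have hw1 : |w| < 1 := hwz.trans_lt hz
  have hzw : z = w * p := by rw [hw]; field_simp
  -- real forms of the recursions
  have r0 : ∀ l, (N p Δ 0 (l + 1) : ℝ) = p ^ l * (p - ε) := by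
    intro l; rw [← hχ]; exact_mod_cast N_zero_succ p hp hp2 Δ hΔ l
  have r1 : ∀ T, (N p Δ (T + 1) 1 : ℝ) = (p - 1) * (1 + ε) + 1 := by
    intro T; rw [← hχ]; exact_mod_cast N_succ_one p hp hp2 Δ hΔ T
  have r2 : ∀ T l, (N p Δ (T + 1) (l + 2) : ℝ)
      = p ^ (l + 1) * ((p - 1) * (1 + ε)) + p ^ 2 * N p Δ T l := by
    intro T l; rw [← hχ]; exact_mod_cast N_succ_succ p hp hp2 Δ hΔ T l
  have hle : ∀ T l, (N p Δ T l : ℝ) ≤ p ^ (2 * l) := by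
    intro T l
    have : N p Δ T l ≤ p ^ (2 * l) := by
      have := cnt_le (p ^ l) (sol Δ ((p ^ (2 * T) : ℕ) : ℤ) (p ^ l))
      rwa [← pow_mul, mul_comm l] at this
    exact_mod_cast this
  set f : ℕ × ℕ → ℝ := fun Tℓ => a ^ Tℓ.1 * z ^ Tℓ.2 * ((N p Δ Tℓ.1 Tℓ.2 : ℝ) / p ^ (2 * Tℓ.2))
    with hf
  have hsum : Summable f := by
    have h1 : Summable (fun x : ℕ × ℕ => |a| ^ x.1 * |z| ^ x.2) :=
      (summable_geometric_of_lt_one (abs_nonneg _) ha).mul_of_nonneg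
        (summable_geometric_of_lt_one (abs_nonneg _) hz)
        (fun _ => by positivity) (fun _ => by positivity)
    refine Summable.of_norm_bounded h1 ?_
    rintro ⟨T, l⟩
    have h2 : (N p Δ T l : ℝ) / p ^ (2 * l) ≤ 1 := (div_le_one (by positivity)).2 (hle T l)
    have h3 : 0 ≤ (N p Δ T l : ℝ) / p ^ (2 * l) := by positivity
    simp only [hf, norm_mul, norm_pow, Real.norm_eq_abs, abs_of_nonneg h3]
    exact mul_le_of_le_one_right (by positivity) h2
  -- the inner sums
  set g : ℕ → ℕ → ℝ := fun T l => z ^ l * ((N p Δ T l : ℝ) / p ^ (2 * l)) with hg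
  have hgeom : HasSum (fun l : ℕ => w ^ l) (1 - w)⁻¹ := hasSum_geometric_of_abs_lt_one hw1
  have hw' : 1 - w ≠ 0 := by have := (abs_lt.1 hw1).2; linarith
  have ha' : 1 - a ≠ 0 := by have := (abs_lt.1 ha).2; linarith
  have g0 : HasSum (g 0) (1 + w * ((1 - ε / p) * (1 - w)⁻¹)) := by
    have h := (hgeom.mul_left (1 - ε / p)).mul_left w
    have e : (fun l => w * ((1 - ε / p) * w ^ l)) = fun l => g 0 (l + 1) := by
      funext l
      simp only [hg, r0, hzw]
      field_simp
      ring
    rw [e] at h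
    have := h.zero_add
    simpa [hg, N_zero] using this
  set G : ℝ := 1 + w * ((1 + ε) * (1 - 1 / p) + 1 / p)
    + w ^ 2 * ((1 + ε) * (1 - 1 / p)) * (1 - w)⁻¹ with hG
  have gs : ∀ T S, HasSum (g T) S → HasSum (g (T + 1)) (G + w ^ 2 * S) := by
    intro T S hS
    have h := (hgeom.mul_left (w ^ 2 * ((1 + ε) * (1 - 1 / p)))).add (hS.mul_left (w ^ 2))
    have e : (fun l => w ^ 2 * ((1 + ε) * (1 - 1 / p)) * w ^ l + w ^ 2 * g T l)
        = fun l => g (T + 1) (l + 1 + 1) := by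
      funext l
      simp only [hg, r2, hzw]
      field_simp
      ring
    rw [e] at h
    have h' := (HasSum.zero_add (f := fun l => g (T + 1) (l + 1)) h).zero_add
    have e2 : G + w ^ 2 * S = g (T + 1) 0 + (g (T + 1) (0 + 1) +
        (w ^ 2 * ((1 + ε) * (1 - 1 / p)) * (1 - w)⁻¹ + w ^ 2 * S)) := by
      simp only [hg, N_zero, r1, hG, hzw, zero_add]
      field_simp
      ring
    rw [e2]
    exact h'
  have hex : ∀ T, ∃ S, HasSum (g T) S := by
    intro T
    induction T with
    | zero => exact ⟨_, g0⟩
    | succ T ih => obtain ⟨S, hS⟩ := ih; exact ⟨_, gs T S hS⟩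
  choose F hF using hex
  have hF0 : F 0 = 1 + w * ((1 - ε / p) * (1 - w)⁻¹) := (hF 0).unique g0
  have hFs : ∀ T, F (T + 1) = G + w ^ 2 * F T := fun T => (hF (T + 1)).unique (gs T _ (hF T))
  obtain ⟨S, hS⟩ := hsum
  have hA : HasSum (fun T => a ^ T * F T) S := by
    refine hS.prod_fiberwise fun T => ?_
    have := (hF T).mul_left (a ^ T)
    simpa only [hg, hf, mul_assoc] using this
  have hB : HasSum (fun T => a ^ T * F T) (a ^ 0 * F 0 + (a * G * (1 - a)⁻¹ + a * w ^ 2 * S)) := by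
    refine HasSum.zero_add (f := fun T => a ^ T * F T) ?_
    have h := ((hasSum_geometric_of_abs_lt_one ha).mul_left (a * G)).add (hA.mul_left (a * w ^ 2))
    have e : (fun T => a ^ (T + 1) * F (T + 1))
        = fun T => a * G * a ^ T + a * w ^ 2 * (a ^ T * F T) := by
      funext T
      rw [hFs]
      ring
    rw [e]
    exact h
  have hSe := hA.unique hB
  have haw : |a * w| < 1 := by
    rw [abs_mul]; exact mul_lt_one_of_nonneg_of_lt_one_left (abs_nonneg _) ha hw1.le
  have haw2 : |a * w * w| < 1 := by
    rw [abs_mul]; exact mul_lt_one_of_nonneg_of_lt_one_left (abs_nonneg _) haw hw1.le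
  have n1 : 1 - a * w ^ 2 ≠ 0 := by have := (abs_lt.1 haw2).2; intro h; nlinarith
  have n2 : 1 - a * w ≠ 0 := by have := (abs_lt.1 haw).2; linarith
  have n3 : 1 + a * w ≠ 0 := by have := (abs_lt.1 haw).1; linarith
  have hS2 : S = (F 0 + a * G * (1 - a)⁻¹) / (1 - a * w ^ 2) := by
    rw [eq_div_iff n1]; linear_combination hSe
  have hfin : (1 - ε * w / p) * (1 - a ^ 2 * w ^ 2)
        / ((1 - w) * (1 - a) * (1 - a * w ^ 2) * (1 - ε * a * w)) = S := by
    have n4 : 1 - ε * a * w ≠ 0 := by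
      rcases hε2 with h | h
      · rw [h, one_mul]; exact n2
      · rw [h]; convert n3 using 1; ring
    have hnum : F 0 + a * G * (1 - a)⁻¹
        = (1 - ε * w / p) * (1 + ε * a * w) / ((1 - w) * (1 - a)) := by
      rw [hF0, hG]
      rcases hε2 with h | h <;> rw [h] <;> field_simp <;> ring
    have hsq : 1 - a ^ 2 * w ^ 2 = (1 + ε * a * w) * (1 - ε * a * w) := by
      rcases hε2 with h | h <;> rw [h] <;> ring
    rw [hS2, hnum, hsq, div_div, ← mul_assoc, mul_div_mul_right _ _ n4]
  rw [hfin]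
  exact hS
end
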